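/- arXiv:2503.18219 — 2 statements merged into one kernel-verified Lean document; each statement's English description precedes it below -/
import Mathlib

section
/- Let ℓ: ℕ → ℕ∪{∞} be non-decreasing with ℓ* := sup_n ℓ(n) ≥ 4, let X be a separable Banach space with a fixed sequence {ℓ_k}_{k∈ℕ} ⊂ X* whose span is dense in X*, and let K ⊂ X be a compact set that is convex and not contained in any finite-dimensional subspace of X. Then for every α > 0, the optimal randomized order for uniform approximation satisfies β*(𝐔^{α,∞}_{ℓ,DON}, C(K)) = 0. -/
open MeasureTheory ENNReal

noncomputable section

/-- The ReLU activation function. -/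
def relu (x : ℝ) : ℝ := max x 0

/-- A (fully connected feed-forward) neural network: a tuple of affine layers.
`L` is the depth (number of affine maps), `dims j` the width of layer `j`
(only `dims 0, …, dims L` are relevant), `A j`/`b j` the weight matrix and bias
of the `(j+1)`-th affine map. -/
structure ReLUNet where
  L : ℕ
  dims : ℕ → ℕ
  A : (j : ℕ) → Matrix (Fin (dims (j + 1))) (Fin (dims j)) ℝ
  b : (j : ℕ) → Fin (dims (j + 1)) → ℝ

namespace ReLUNet

/-- The hidden representation after `j` layers, each affine map followed by ReLU. -/
def hidden (ψ : ReLUNet) : (j : ℕ) → (Fin (ψ.dims 0) → ℝ) → Fin (ψ.dims j) → ℝ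
  | 0, x => x
  | (j + 1), x => fun i => relu ((∑ k, ψ.A j i k * ψ.hidden j x k) + ψ.b j i)

/-- The ReLU realization `R_σ ψ = T_L ∘ (σ ∘ T_{L-1}) ∘ ⋯ ∘ (σ ∘ T_1)`:
the final affine map is applied without activation. -/
def realize (ψ : ReLUNet) (x : Fin (ψ.dims 0) → ℝ) (i : Fin (ψ.dims (ψ.L - 1 + 1))) : ℝ :=
  (∑ k, ψ.A (ψ.L - 1) i k * ψ.hidden (ψ.L - 1) x k) + ψ.b (ψ.L - 1) i

open Classical in
/-- `W ψ`: the number of nonzero weights and biases of `ψ`. -/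
def W (ψ : ReLUNet) : ℕ :=
  ∑ j ∈ Finset.range ψ.L,
    ((((Finset.univ : Finset (Fin (ψ.dims (j + 1)) × Fin (ψ.dims j))).filter
        fun p => ψ.A j p.1 p.2 ≠ 0).card)
      + (((Finset.univ : Finset (Fin (ψ.dims (j + 1)))).filter fun i => ψ.b j i ≠ 0).card))

/-- All weight and bias entries have magnitude at most 1, i.e. `‖ψ‖_NN ≤ 1`. -/
def normBdd (ψ : ReLUNet) : Prop :=
  ∀ j < ψ.L, (∀ i k, |ψ.A j i k| ≤ 1) ∧ (∀ i, |ψ.b j i| ≤ 1)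

end ReLUNet

/-- `Σ_{d,n}^ℓ` : realizations of ReLU networks `ℝ^d → ℝ` with at most `n` nonzero
weights, depth at most `ℓ n`, and weight magnitudes at most `1`. -/
def SigmaSet (d n : ℕ) (ℓ : ℕ → ℕ∞) : Set ((Fin d → ℝ) → ℝ) :=
  { g | ∃ ψ : ReLUNet, ∃ h0 : ψ.dims 0 = d, ∃ hout : ψ.dims (ψ.L - 1 + 1) = 1,
      1 ≤ ψ.L ∧ ψ.W ≤ n ∧ (ψ.L : ℕ∞) ≤ ℓ n ∧ ψ.normBdd ∧
      ∀ x : Fin d → ℝ, g x = ψ.realize (fun i => x (Fin.cast h0 i)) (Fin.cast hout.symm 0) }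

/-- The sup-distance (in `ℝ≥0∞`) between two functions over a set `D`. -/
def supDist {d : ℕ} (D : Set (Fin d → ℝ)) (f g : (Fin d → ℝ) → ℝ) : ℝ≥0∞ :=
  ⨆ x ∈ D, ENNReal.ofReal |f x - g x|

/-- The unit ball `U^{α,∞}_ℓ(D)` of the neural network approximation space:
functions bounded by `1` on `D` which are approximated in `L^∞(D)` at rate `n^{-α}`
by networks from `Σ_{d,n}^ℓ`. -/
def UnitBall (d : ℕ) (α : ℝ) (ℓ : ℕ → ℕ∞) (D : Set (Fin d → ℝ)) :
    Set ((Fin d → ℝ) → ℝ) :=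
  { f | (∀ x ∈ D, |f x| ≤ 1) ∧
      ∀ n : ℕ, 1 ≤ n →
        (⨅ g ∈ SigmaSet d n ℓ, supDist D f g) ≤ ENNReal.ofReal ((n : ℝ) ^ (-α)) }

/-- `A` is a deterministic method using `N` point measurements (taken from `D`) on `U`. -/
def IsDetMethod {X Y : Type*} (U : Set (X → ℝ)) (D : Set X) (N : ℕ)
    (A : (X → ℝ) → Y) : Prop :=
  ∃ pts : Fin N → X, (∀ j, pts j ∈ D) ∧
    ∃ Q : (Fin N → ℝ) → Y, ∀ f ∈ U, A f = Q fun j => f (pts j)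

/-- The `L^p(μ)`-error between `f` and `g` (with `p = ∞` giving the essential sup). -/
def lpError {X : Type*} [MeasurableSpace X] (p : ℝ≥0∞) (μ : Measure X)
    (f g : X → ℝ) : ℝ≥0∞ :=
  eLpNorm (fun x => f x - g x) p μ

/-- The optimal randomized error `e_N^{ran}(U, L^p(μ))` using (in expectation) `N` point
samples drawn from `D`. -/
def ranError {X : Type*} [MeasurableSpace X] (U : Set (X → ℝ)) (D : Set X)
    (p : ℝ≥0∞) (μ : Measure X) (N : ℕ) : ℝ≥0∞ :=
  ⨅ (Ω : Type) (_ : MeasurableSpace Ω) (P : Measure Ω) (_ : IsProbabilityMeasure P)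
    (A : Ω → (X → ℝ) → (X → ℝ)) (Ncnt : Ω → ℕ) (_ : Measurable Ncnt)
    (_ : ∫⁻ ω, (Ncnt ω : ℝ≥0∞) ∂P ≤ N)
    (_ : ∀ ω, IsDetMethod U D (Ncnt ω) (A ω))
    (_ : ∀ f ∈ U, Measurable fun ω => lpError p μ f (A ω f)),
    ⨆ f ∈ U, ∫⁻ ω, lpError p μ f (A ω f) ∂P

/-- The optimal randomized order of convergence `β_*(U, L^p(μ))`. -/
def betaStar {X : Type*} [MeasurableSpace X] (U : Set (X → ℝ)) (D : Set X)
    (p : ℝ≥0∞) (μ : Measure X) : ℝ :=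
  sSup { β : ℝ | 0 ≤ β ∧ ∃ C : ℝ, 0 < C ∧
    ∀ N : ℕ, 1 ≤ N → ranError U D p μ N ≤ ENNReal.ofReal (C * (N : ℝ) ^ (-β)) }

/-- The sup-norm error `‖f - g‖_{C(K)}` over a set `K` (in `ℝ≥0∞`). -/
def supError {X : Type*} (K : Set X) (f g : X → ℝ) : ℝ≥0∞ :=
  ⨆ u ∈ K, ENNReal.ofReal |f u - g u|

/-- The optimal randomized error `e_N^{ran}(U, C(K))` for uniform approximation on `K`. -/
def ranErrorSup {X : Type*} (U : Set (X → ℝ)) (K : Set X) (N : ℕ) : ℝ≥0∞ :=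
  ⨅ (Ω : Type) (_ : MeasurableSpace Ω) (P : Measure Ω) (_ : IsProbabilityMeasure P)
    (A : Ω → (X → ℝ) → (X → ℝ)) (Ncnt : Ω → ℕ) (_ : Measurable Ncnt)
    (_ : ∫⁻ ω, (Ncnt ω : ℝ≥0∞) ∂P ≤ N)
    (_ : ∀ ω, IsDetMethod U Set.univ (Ncnt ω) (A ω))
    (_ : ∀ f ∈ U, Measurable fun ω => supError K f (A ω f)),
    ⨆ f ∈ U, ∫⁻ ω, supError K f (A ω f) ∂P

/-- The optimal randomized order of convergence `β_*(U, C(K))`. -/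
def betaStarSup {X : Type*} (U : Set (X → ℝ)) (K : Set X) : ℝ :=
  sSup { β : ℝ | 0 ≤ β ∧ ∃ C : ℝ, 0 < C ∧
    ∀ N : ℕ, 1 ≤ N → ranErrorSup U K N ≤ ENNReal.ofReal (C * (N : ℝ) ^ (-β)) }

/-- `Σ^ℓ_{n,DON}` : DeepONets `Ψ = ψ ∘ L_{d₀}`, where `L_{d₀}(u) = (ℓ_1(u),…,ℓ_{d₀}(u))`
and `ψ` is a ReLU network with input dimension `d₀`, `max(W(ψ), d₀) ≤ n`, depth at most
`ℓ(n)` and weight magnitudes at most `1`. -/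
def DONSigma {X : Type*} [NormedAddCommGroup X] [NormedSpace ℝ X]
    (lk : ℕ → X →L[ℝ] ℝ) (n : ℕ) (ℓ : ℕ → ℕ∞) : Set (X → ℝ) :=
  { G | ∃ d₀ : ℕ, d₀ ≤ n ∧ ∃ g ∈ SigmaSet d₀ n ℓ,
      ∀ u, G u = g fun k : Fin d₀ => lk (k : ℕ) u }

/-- The unit ball `𝐔^{α,∞}_{ℓ,DON}` of the DeepONet approximation space: continuous
`G : X → ℝ` with `sup_u |G(u)| ≤ 1` approximated uniformly at rate `n^{-α}` by
elements of `Σ^ℓ_{n,DON}`. -/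
def DONUnitBall {X : Type*} [NormedAddCommGroup X] [NormedSpace ℝ X]
    (lk : ℕ → X →L[ℝ] ℝ) (α : ℝ) (ℓ : ℕ → ℕ∞) : Set (X → ℝ) :=
  { G | Continuous G ∧ (∀ u, |G u| ≤ 1) ∧
      ∀ n : ℕ, 1 ≤ n →
        (⨅ Ψ ∈ DONSigma lk n ℓ, ⨆ u, ENNReal.ofReal |G u - Ψ u|) ≤
          ENNReal.ofReal ((n : ℝ) ^ (-α)) }

/-!
Reading `u` through finitely many linear combinations of the `ℓ_k` gives a map `T : X → ℝ^d`.
Because the `ℓ_k` separate points and `K` is convex and infinite-dimensional, for every `d` the map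
`T` can be chosen so that `T '' K` contains a translate of the unit cube. Put `M ^ d` tents with
disjoint supports on a grid in that cube: `u ↦ h · relu (1 - 2M · ‖T u - y‖₁)` is a ReLU network of
depth `3` with `O(M)` weights of size at most `1`, so for `h ≍ M ^ (-α)` it lies in the unit ball.
A method with `N ≲ M ^ d` samples misses most tents and cannot tell those from the zero function,
so its error is `≳ N ^ (-α / d)`. Letting `d → ∞` excludes every positive rate.
-/

section Networks

lemma relu_nonneg (x : ℝ) : 0 ≤ relu x := le_max_right x 0

lemma relu_of_nonpos {x : ℝ} (hx : x ≤ 0) : relu x = 0 := max_eq_right hx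

lemma relu_le_one {x : ℝ} (hx : x ≤ 1) : relu x ≤ 1 := max_le hx zero_le_one

lemma continuous_relu : Continuous relu := continuous_id.max continuous_const

lemma relu_add_relu_neg (x : ℝ) : relu x + relu (-x) = |x| :=
  max_zero_add_max_neg_zero_eq_abs_self x

lemma ReLUNet.W_le_sum_dims (ψ : ReLUNet) :
    ψ.W ≤ ∑ j ∈ Finset.range ψ.L, (ψ.dims (j + 1) * ψ.dims j + ψ.dims (j + 1)) := by
  classical
  refine Finset.sum_le_sum fun j _ => add_le_add ?_ ?_
  · exact (Finset.card_filter_le _ _).trans_eq (by simp)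
  · exact (Finset.card_filter_le _ _).trans_eq (by simp)

/-- The one-layer network on `ℝ^d` all of whose weights vanish; it realizes the zero function
within every weight budget. -/
def zeroNet (d : ℕ) : ReLUNet where
  L := 1
  dims
    | 0 => d
    | _ + 1 => 1
  A _ _ _ := 0
  b _ _ := 0

lemma zero_mem_SigmaSet (d : ℕ) {n : ℕ} {ℓ : ℕ → ℕ∞} (hℓ : 1 ≤ ℓ n) :
    (0 : (Fin d → ℝ) → ℝ) ∈ SigmaSet d n ℓ := by
  refine ⟨zeroNet d, rfl, rfl, le_rfl, ?_, by simpa [zeroNet] using hℓ, ?_, ?_⟩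
  · simp [ReLUNet.W, zeroNet]
  · intro j _
    simp [zeroNet]
  · intro x
    simp [ReLUNet.realize, zeroNet]

/-- The three-layer network realizing `x ↦ h * relu (1 - ∑ r, relu (A r ⬝ x + b r))`, the template
for localized bumps: it can be nonzero only where all `m` first-layer units are small. -/
def hatNet {d m : ℕ} (A : Fin m → Fin d → ℝ) (b : Fin m → ℝ) (h : ℝ) : ReLUNet where
  L := 3
  dims
    | 0 => d
    | 1 => m
    | _ + 2 => 1
  A
    | 0 => A
    | 1 => fun _ _ => -1
    | _ + 2 => fun _ _ => h
  b
    | 0 => b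
    | 1 => fun _ => 1
    | _ + 2 => fun _ => 0

lemma hatNet_W_le {d m : ℕ} (A : Fin m → Fin d → ℝ) (b : Fin m → ℝ) (h : ℝ) :
    (hatNet A b h).W ≤ m * (d + 2) + 3 := by
  refine (hatNet A b h).W_le_sum_dims.trans_eq ?_
  simp only [hatNet, Finset.sum_range_succ, Finset.sum_range_zero]
  ring

lemma hatNet_normBdd {d m : ℕ} {A : Fin m → Fin d → ℝ} {b : Fin m → ℝ} {h : ℝ}
    (hA : ∀ r k, |A r k| ≤ 1) (hb : ∀ r, |b r| ≤ 1) (hh : |h| ≤ 1) : (hatNet A b h).normBdd := by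
  rintro (_ | _ | j) -
  · exact ⟨hA, hb⟩
  · exact ⟨fun _ _ => by simp [hatNet], fun _ => by simp [hatNet]⟩
  · exact ⟨fun _ _ => hh, fun _ => by simp [hatNet]⟩

lemma hatNet_realize {d m : ℕ} (A : Fin m → Fin d → ℝ) (b : Fin m → ℝ) (h : ℝ) (x : Fin d → ℝ) :
    (hatNet A b h).realize x (0 : Fin 1) =
      h * relu (1 - ∑ r, relu (∑ k, A r k * x k + b r)) := by
  change ∑ _ : Fin 1, h * relu (∑ r, -1 * relu (∑ k, A r k * x k + b r) + 1) + 0 = _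
  simp [neg_add_eq_sub]

lemma hat_mem_SigmaSet {κ : Type*} [Fintype κ] {d n : ℕ} {ℓ : ℕ → ℕ∞} {A : κ → Fin d → ℝ}
    {b : κ → ℝ} {h : ℝ} (hA : ∀ r k, |A r k| ≤ 1) (hb : ∀ r, |b r| ≤ 1) (hh : |h| ≤ 1)
    (hn : Fintype.card κ * (d + 2) + 3 ≤ n) (hℓ : 3 ≤ ℓ n) :
    (fun x : Fin d → ℝ => h * relu (1 - ∑ r, relu (∑ k, A r k * x k + b r))) ∈
      SigmaSet d n ℓ := by
  let e := (Fintype.equivFin κ).symm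
  refine ⟨hatNet (A ∘ e) (b ∘ e) h, rfl, rfl, by simp [hatNet], (hatNet_W_le ..).trans hn, hℓ,
    hatNet_normBdd (fun r => hA (e r)) (fun r => hb (e r)) hh, fun x => ?_⟩
  have hsum := e.sum_comp fun r => relu (∑ k, A r k * x k + b r)
  exact (congrArg (fun z => h * relu (1 - z)) hsum.symm).trans
    (hatNet_realize (A ∘ e) (b ∘ e) h x).symm

end Networks

section Tent

variable {ι : Type*} [Fintype ι]

/-- The tent of height `h` and slope `s` over the `ℓ¹`-ball of radius `1 / s` around `y`. -/
def tent (h s : ℝ) (y x : ι → ℝ) : ℝ := h * relu (1 - s * ∑ i, |x i - y i|)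

lemma tent_self (h s : ℝ) (y : ι → ℝ) : tent h s y y = h := by simp [tent, relu]

lemma continuous_tent (h s : ℝ) (y : ι → ℝ) : Continuous (tent h s y) := by
  unfold tent
  exact continuous_const.mul (continuous_relu.comp (by fun_prop))

lemma abs_tent_le {s : ℝ} (hs : 0 ≤ s) (h : ℝ) (y x : ι → ℝ) : |tent h s y x| ≤ |h| := by
  have hle : relu (1 - s * ∑ i, |x i - y i|) ≤ 1 := relu_le_one (sub_le_self _ (by positivity))
  rw [tent, abs_mul, abs_of_nonneg (relu_nonneg _)]
  exact mul_le_of_le_one_right (abs_nonneg h) hle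

lemma mul_abs_sub_lt_one_of_tent_ne_zero {h s : ℝ} (hs : 0 ≤ s) {y x : ι → ℝ}
    (hx : tent h s y x ≠ 0) (i : ι) : s * |x i - y i| < 1 := by
  have hsum : s * ∑ i, |x i - y i| < 1 := by
    by_contra! hle
    exact hx (by rw [tent, relu_of_nonpos (by linarith), mul_zero])
  refine lt_of_le_of_lt (mul_le_mul_of_nonneg_left ?_ hs) hsum
  exact Finset.single_le_sum (f := fun i => |x i - y i|) (fun _ _ => abs_nonneg _)
    (Finset.mem_univ i)

lemma disjoint_support_tent {h s : ℝ} (hs : 0 ≤ s) {y y' : ι → ℝ} {i : ι}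
    (hy : 2 ≤ s * |y i - y' i|) :
    Disjoint (Function.support (tent h s y)) (Function.support (tent h s y')) := by
  refine Set.disjoint_left.mpr fun x hx hx' => ?_
  have hxy := mul_abs_sub_lt_one_of_tent_ne_zero hs hx i
  have hxy' := mul_abs_sub_lt_one_of_tent_ne_zero hs hx' i
  have htri : s * |y i - y' i| ≤ s * |x i - y i| + s * |x i - y' i| := by
    rw [← mul_add, abs_sub_comm (x i) (y i)]
    exact mul_le_mul_of_nonneg_left (abs_sub_le _ _ _) hs
  linarith

-- Weights are bounded by `1`, so the slope `s` and the coefficients of size up to `B` are produced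
-- by summing `s * B` identical copies of each unit.
lemma tent_mem_SigmaSet {d n B s : ℕ} {ℓ : ℕ → ℕ∞} {c : ι → Fin d → ℝ} {y : ι → ℝ} {h : ℝ}
    (hB : 0 < B) (hc : ∀ i k, |c i k| ≤ B) (hy : ∀ i, |y i| ≤ B) (hh : |h| ≤ 1)
    (hn : 2 * (Fintype.card ι * (s * B)) * (d + 2) + 3 ≤ n) (hℓ : 3 ≤ ℓ n) :
    (fun x : Fin d → ℝ => tent h s y fun i => ∑ k, c i k * x k) ∈ SigmaSet d n ℓ := by
  have hB' : (0 : ℝ) < B := by exact_mod_cast hB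
  have hdiv {z : ℝ} (hz : |z| ≤ B) : |z / B| ≤ 1 := by
    rwa [abs_div, abs_of_pos hB', div_le_one hB']
  let A : ι × Fin (s * B) → Fin d → ℝ := fun r k => c r.1 k / B
  let b : ι × Fin (s * B) → ℝ := fun r => -y r.1 / B
  have hA (r k) : |A r k| ≤ 1 := hdiv (hc r.1 k)
  have hb (r) : |b r| ≤ 1 := hdiv (by rw [abs_neg]; exact hy r.1)
  have hunit (x : Fin d → ℝ) (r : ι × Fin (s * B)) :
      ∑ k, A r k * x k + b r = (∑ k, c r.1 k * x k - y r.1) / B := by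
    simp only [A, b, div_mul_eq_mul_div, ← Finset.sum_div]
    ring
  have hmem := hat_mem_SigmaSet (A := Sum.elim A (-A)) (b := Sum.elim b (-b)) (n := n) (ℓ := ℓ)
    (Sum.forall.mpr ⟨hA, by simpa using hA⟩) (Sum.forall.mpr ⟨hb, by simpa using hb⟩) hh
    (by simpa [two_mul] using hn) hℓ
  have habs (x : Fin d → ℝ) :
      ∑ r, relu (∑ k, Sum.elim A (-A) r k * x k + Sum.elim b (-b) r) =
        s * ∑ i, |∑ k, c i k * x k - y i| :=
    calc ∑ r, relu (∑ k, Sum.elim A (-A) r k * x k + Sum.elim b (-b) r)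
        = ∑ r, |∑ k, A r k * x k + b r| := by
          simp only [Fintype.sum_sum_type, Sum.elim_inl, Sum.elim_inr, Pi.neg_apply, neg_mul,
            Finset.sum_neg_distrib, ← neg_add, ← relu_add_relu_neg, Finset.sum_add_distrib]
      _ = ∑ i, (s * B : ℕ) * (|∑ k, c i k * x k - y i| / B) := by
          simp only [hunit, abs_div, Nat.abs_cast, Fintype.sum_prod_type, Finset.sum_const,
            Finset.card_univ, Fintype.card_fin, nsmul_eq_mul]
      _ = s * ∑ i, |∑ k, c i k * x k - y i| := by
          rw [Finset.mul_sum]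
          refine Finset.sum_congr rfl fun i _ => ?_
          push_cast
          field_simp
  simpa only [tent, habs] using hmem

end Tent

section Grid

variable {ι : Type*} {M : ℕ}

/-- The node with multi-index `j` of the regular grid of mesh `1 / M` in the cube `[a, a + 1]`. -/
def gridPoint (a : ι → ℝ) (j : ι → Fin M) (i : ι) : ℝ := a i + (j i : ℕ) / M

lemma gridPoint_mem_Icc (a : ι → ℝ) (j : ι → Fin M) : gridPoint a j ∈ Set.Icc a (a + 1) := by
  refine ⟨fun i => le_add_of_nonneg_right (by positivity), fun i => ?_⟩
  exact add_le_add_right (div_le_one_of_le₀ (Nat.cast_le.mpr (j i).2.le) (by positivity)) _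

lemma one_le_mul_abs_gridPoint_sub (a : ι → ℝ) {j j' : ι → Fin M} {i : ι} (hij : j i ≠ j' i) :
    1 ≤ M * |gridPoint a j i - gridPoint a j' i| := by
  have hM : (0 : ℝ) < M := by exact_mod_cast (j i).pos
  have hint : (1 : ℝ) ≤ |((j i : ℕ) : ℝ) - (j' i : ℕ)| := by
    have : ((j i : ℕ) : ℤ) - (j' i : ℕ) ≠ 0 := by
      rw [sub_ne_zero]
      exact_mod_cast Fin.val_ne_of_ne hij
    exact_mod_cast Int.one_le_abs this
  have hscale : M * (gridPoint a j i - gridPoint a j' i) = (j i : ℕ) - (j' i : ℕ) := by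
    simp only [gridPoint]
    field_simp
    ring
  rwa [← hscale, abs_mul, Nat.abs_cast] at hint

lemma pairwise_disjoint_support_tent_gridPoint [Fintype ι] (a : ι → ℝ) (h : ℝ) :
    Pairwise (Function.onFun Disjoint fun j : ι → Fin M =>
      Function.support (tent h (2 * M : ℕ) (gridPoint a j))) := by
  intro j j' hjj'
  obtain ⟨i, hi⟩ := Function.ne_iff.mp hjj'
  refine disjoint_support_tent (i := i) (by positivity) ?_
  push_cast
  linarith [one_le_mul_abs_gridPoint_sub a hi]

end Grid

section Geometry

lemma eq_zero_of_dense_span_of_forall_eq_zero {X κ : Type*} [NormedAddCommGroup X]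
    [NormedSpace ℝ X] {f : κ → X →L[ℝ] ℝ}
    (hf : Dense (Submodule.span ℝ (Set.range f) : Set (X →L[ℝ] ℝ))) {u : X}
    (hu : ∀ k, f k u = 0) : u = 0 := by
  let eval : (X →L[ℝ] ℝ) →L[ℝ] ℝ := ContinuousLinearMap.apply ℝ ℝ u
  have heval : eval = 0 :=
    ContinuousLinearMap.ext_on hf (Set.forall_mem_range.mpr hu)
  exact SeparatingDual.eq_zero_of_forall_dual_eq_zero (R := ℝ) fun g => DFunLike.congr_fun heval g

lemma exists_finsupp_biorthogonal {𝕜 V ι κ : Type*} [Field 𝕜] [AddCommGroup V] [Module 𝕜 V]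
    [Finite ι] [DecidableEq ι] {f : κ → Module.Dual 𝕜 V} (hf : ∀ v, (∀ k, f k v = 0) → v = 0)
    {w : ι → V} (hw : LinearIndependent 𝕜 w) (i : ι) :
    ∃ c : κ →₀ 𝕜, ∀ j, Finsupp.linearCombination 𝕜 f c (w j) = if i = j then 1 else 0 := by
  have := Fintype.ofFinite ι
  let B : (κ →₀ 𝕜) →ₗ[𝕜] (ι → 𝕜) →ₗ[𝕜] 𝕜 :=
    (Fintype.linearCombination 𝕜 w).dualMap ∘ₗ Finsupp.linearCombination 𝕜 f
  have hB : Function.Injective B.flip := by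
    refine (injective_iff_map_eq_zero _).mpr fun x hx => ?_
    have hzero : Fintype.linearCombination 𝕜 w x = 0 :=
      hf _ fun k => by simpa [B] using DFunLike.congr_fun hx (Finsupp.single k 1)
    exact funext (Fintype.linearIndependent_iff.mp hw x hzero)
  obtain ⟨c, hc⟩ := LinearMap.flip_injective_iff₂.mp hB (LinearMap.proj i)
  refine ⟨c, fun j => ?_⟩
  simpa [B, Pi.single_apply] using DFunLike.congr_fun hc (Pi.single j 1)

lemma exists_linearIndependent_add_mem {𝕜 V : Type*} [DivisionRing 𝕜] [AddCommGroup V]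
    [Module 𝕜 V] {K : Set V}
    (hK : ¬ ∃ S : Submodule 𝕜 V, FiniteDimensional 𝕜 S ∧ K ⊆ (S : Set V)) (d : ℕ) :
    ∃ v ∈ K, ∃ w : Fin d → V, LinearIndependent 𝕜 w ∧ ∀ i, v + w i ∈ K := by
  obtain ⟨v, hv⟩ : K.Nonempty := by
    by_contra hne
    exact hK ⟨⊥, inferInstance, by simp [Set.not_nonempty_iff_eq_empty.mp hne]⟩
  obtain ⟨b, hbK, hspan, hb⟩ := exists_linearIndependent 𝕜 ((fun x => x - v) '' K)
  have hinf : b.Infinite := by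
    intro hfin
    have := FiniteDimensional.span_of_finite 𝕜 hfin
    refine hK ⟨Submodule.span 𝕜 b ⊔ Submodule.span 𝕜 {v}, inferInstance, fun x hx => ?_⟩
    have hxv : x - v ∈ Submodule.span 𝕜 b := hspan ▸ Submodule.subset_span ⟨x, hx, rfl⟩
    simpa using Submodule.add_mem_sup hxv (Submodule.mem_span_singleton_self v)
  let φ : Fin d ↪ b := Fin.valEmbedding.trans hinf.natEmbedding
  refine ⟨v, hv, fun i => φ i, hb.comp φ φ.injective, fun i => ?_⟩
  obtain ⟨x, hx, hxφ⟩ := hbK (φ i).2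
  simpa [← hxφ] using hx

lemma add_sum_smul_mem_of_convex {V ι : Type*} [AddCommGroup V] [Module ℝ V] [Fintype ι]
    {K : Set V} (hK : Convex ℝ K) {v : V} (hv : v ∈ K) {w : ι → V} (hw : ∀ i, v + w i ∈ K)
    {t : ι → ℝ} (ht : ∀ i, 0 ≤ t i) (hsum : ∑ i, t i ≤ 1) : v + ∑ i, t i • w i ∈ K := by
  have hmem := hK.sum_mem (t := Finset.univ)
    (w := fun o : Option ι => o.elim (1 - ∑ i, t i) t) (z := fun o => o.elim v fun i => v + w i)
    (by simpa [Option.forall] using ⟨hsum, ht⟩) (by simp [Fintype.sum_option])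
    (by simpa [Option.forall] using ⟨hv, hw⟩)
  convert hmem using 1
  simp only [Fintype.sum_option, Option.elim_none, Option.elim_some, smul_add,
    Finset.sum_add_distrib, ← Finset.sum_smul, sub_smul, one_smul]
  abel

end Geometry

section Readout

variable {X : Type*} [NormedAddCommGroup X] [NormedSpace ℝ X] {ι : Type*} {D : ℕ}

/-- The map `u ↦ (∑ k < D, c i k * ℓ_k u)_i` reading an input through the first `D` functionals;
it factors through the encoder `L_D` of a DeepONet. -/
def readout (lk : ℕ → X →L[ℝ] ℝ) (c : ι → Fin D → ℝ) : X →L[ℝ] (ι → ℝ) :=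
  ContinuousLinearMap.pi fun i => ∑ k : Fin D, c i k • lk k

lemma readout_apply (lk : ℕ → X →L[ℝ] ℝ) (c : ι → Fin D → ℝ) (u : X) (i : ι) :
    readout lk c u i = ∑ k : Fin D, c i k * lk k u := by
  simp [readout]

lemma exists_readout_eq_linearCombination [Finite ι] (lk : ℕ → X →L[ℝ] ℝ) (c : ι → ℕ →₀ ℝ) :
    ∃ (D : ℕ) (c' : ι → Fin D → ℝ), ∀ u i,
      readout lk c' u i = Finsupp.linearCombination ℝ (fun k => (lk k : X →ₗ[ℝ] ℝ)) (c i) u := by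
  classical
  have := Fintype.ofFinite ι
  obtain ⟨D, hD⟩ := (Finset.univ.biUnion fun i => (c i).support).exists_nat_subset_range
  have hsupp (i : ι) : (c i).support ⊆ Finset.range D :=
    (Finset.subset_biUnion_of_mem (fun i => (c i).support) (Finset.mem_univ i)).trans hD
  refine ⟨D, fun i k => c i k, fun u i => ?_⟩
  rw [readout_apply, Finsupp.linearCombination_apply,
    Finsupp.sum_of_support_subset _ (hsupp i) _ (by simp),
    Fin.sum_univ_eq_sum_range (fun k => c i k * lk k u) D]
  simp

lemma exists_Icc_subset_readout_image {lk : ℕ → X →L[ℝ] ℝ}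
    (hsep : ∀ u, (∀ k, lk k u = 0) → u = 0) {K : Set X} (hconv : Convex ℝ K)
    (hfd : ¬ ∃ S : Submodule ℝ X, FiniteDimensional ℝ S ∧ K ⊆ (S : Set X)) (d : ℕ) :
    ∃ (D : ℕ) (c : Fin d → Fin D → ℝ) (a : Fin d → ℝ), Set.Icc a (a + 1) ⊆ readout lk c '' K := by
  obtain ⟨v, hv, w, hw, hwK⟩ := exists_linearIndependent_add_mem hfd d
  choose c hc using exists_finsupp_biorthogonal (f := fun k => (lk k : X →ₗ[ℝ] ℝ)) hsep hw
  -- Only `v` plus the simplex spanned by the `w i` is known to lie in `K`; stretching the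
  -- biorthogonal functionals by `d` turns the cube of side `1 / d` inside it into a unit cube.
  obtain ⟨D, c', hc'⟩ := exists_readout_eq_linearCombination lk fun i => (d : ℝ) • c i
  have hdual (i j : Fin d) : readout lk c' (w j) i = if i = j then (d : ℝ) else 0 := by
    simp only [hc', map_smul, LinearMap.smul_apply, hc, smul_eq_mul, mul_ite, mul_one, mul_zero]
  refine ⟨D, c', readout lk c' v, fun y hy => ?_⟩
  let t : Fin d → ℝ := fun i => (y i - readout lk c' v i) / d
  have ht (i : Fin d) : 0 ≤ t i := div_nonneg (sub_nonneg.mpr (hy.1 i)) (by positivity)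
  have hsum : ∑ i, t i ≤ 1 := by
    have hle (i : Fin d) : y i - readout lk c' v i ≤ 1 := sub_le_iff_le_add'.mpr (hy.2 i)
    rw [← Finset.sum_div]
    exact div_le_one_of_le₀ ((Finset.sum_le_sum fun i _ => hle i).trans_eq (by simp))
      (by positivity)
  refine ⟨v + ∑ i, t i • w i, add_sum_smul_mem_of_convex hconv hv hwK ht hsum, funext fun i => ?_⟩
  have hd : (d : ℝ) ≠ 0 := by exact_mod_cast i.pos.ne'
  simp only [map_add, map_sum, map_smul, Pi.add_apply, Finset.sum_apply, Pi.smul_apply, hdual,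
    smul_eq_mul, mul_ite, mul_zero, Finset.sum_ite_eq, Finset.mem_univ, if_true, t]
  field_simp
  ring

end Readout

section UnitBall

variable {X : Type*} [NormedAddCommGroup X] [NormedSpace ℝ X] {lk : ℕ → X →L[ℝ] ℝ}
  {ℓ : ℕ → ℕ∞} {α : ℝ}

lemma zero_mem_DONSigma (lk : ℕ → X →L[ℝ] ℝ) {n : ℕ} (hℓ : 1 ≤ ℓ n) :
    (0 : X → ℝ) ∈ DONSigma lk n ℓ :=
  ⟨0, Nat.zero_le n, 0, zero_mem_SigmaSet 0 hℓ, fun _ => rfl⟩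

lemma mem_DONUnitBall_of_forall_mem_DONSigma (hα : 0 ≤ α) (hℓ : ∀ k, 1 ≤ k → 1 ≤ ℓ k) {n : ℕ}
    (hn : 1 ≤ n) {G : X → ℝ} (hcont : Continuous G) (hbound : ∀ u, |G u| ≤ (n : ℝ) ^ (-α))
    (hmem : ∀ k, n ≤ k → G ∈ DONSigma lk k ℓ) : G ∈ DONUnitBall lk α ℓ := by
  have hα' : -α ≤ 0 := neg_nonpos.mpr hα
  refine ⟨hcont, fun u => (hbound u).trans
    (Real.rpow_le_one_of_one_le_of_nonpos (by exact_mod_cast hn) hα'), fun k hk => ?_⟩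
  rcases le_or_gt n k with hnk | hkn
  · exact (iInf₂_le G (hmem k hnk)).trans (by simp)
  · refine (iInf₂_le 0 (zero_mem_DONSigma lk (hℓ k hk))).trans
      (iSup_le fun u => ENNReal.ofReal_le_ofReal ?_)
    rw [Pi.zero_apply, sub_zero]
    exact (hbound u).trans (Real.rpow_le_rpow_of_nonpos (by exact_mod_cast hk)
      (by exact_mod_cast hkn.le) hα')

lemma zero_mem_DONUnitBall (lk : ℕ → X →L[ℝ] ℝ) (hα : 0 ≤ α) (hℓ : ∀ k, 1 ≤ k → 1 ≤ ℓ k) :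
    (0 : X → ℝ) ∈ DONUnitBall lk α ℓ :=
  mem_DONUnitBall_of_forall_mem_DONSigma hα hℓ le_rfl continuous_const (by simp)
    fun k hk => zero_mem_DONSigma lk (hℓ k hk)

lemma DONUnitBall_eq_empty (lk : ℕ → X →L[ℝ] ℝ) (α : ℝ) (hℓ : ℓ 1 = 0) :
    DONUnitBall lk α ℓ = ∅ := by
  have hempty : DONSigma lk 1 ℓ = ∅ := by
    refine Set.eq_empty_of_forall_notMem ?_
    rintro Ψ ⟨d₀, -, g, ⟨ψ, -, -, hpos, -, hdepth, -⟩, -⟩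
    rw [hℓ, nonpos_iff_eq_zero, Nat.cast_eq_zero] at hdepth
    omega
  refine Set.eq_empty_of_forall_notMem fun G hG => ?_
  simpa [hempty] using hG.2.2 1 le_rfl

lemma tent_readout_mem_DONSigma {ι : Type*} [Fintype ι] {D n B s : ℕ} {c : ι → Fin D → ℝ}
    {y : ι → ℝ} {h : ℝ} (hB : 0 < B) (hc : ∀ i k, |c i k| ≤ B) (hy : ∀ i, |y i| ≤ B)
    (hh : |h| ≤ 1) (hn : 2 * (Fintype.card ι * (s * B)) * (D + 2) + 3 ≤ n) (hD : D ≤ n)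
    (hℓ : 3 ≤ ℓ n) : (fun u => tent h s y (readout lk c u)) ∈ DONSigma lk n ℓ := by
  refine ⟨D, hD, _, tent_mem_SigmaSet hB hc hy hh hn hℓ, fun u => ?_⟩
  exact congrArg (tent h s y) (funext fun i => readout_apply lk c u i)

lemma exists_tent_gridPoint_mem_DONUnitBall (hα : 0 ≤ α) (hmono : Monotone ℓ) (hℓ : 1 ≤ ℓ 1)
    {n₀ : ℕ} (hn₀ : 3 ≤ ℓ n₀) {ι : Type*} [Fintype ι] {D : ℕ} (c : ι → Fin D → ℝ) (a : ι → ℝ) :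
    ∃ R : ℕ, 0 < R ∧ ∀ (M : ℕ) (j : ι → Fin M), 1 ≤ M →
      (fun u => tent (((R * M : ℕ) : ℝ) ^ (-α)) (2 * M : ℕ) (gridPoint a j) (readout lk c u)) ∈
        DONUnitBall lk α ℓ := by
  obtain ⟨Bc, hBc⟩ := Finite.exists_le fun p : ι × Fin D => ⌈|c p.1 p.2|⌉₊
  obtain ⟨Ba, hBa⟩ := Finite.exists_le fun i => ⌈|a i|⌉₊
  let B := Bc + Ba + 1
  have hc (i : ι) (k : Fin D) : |c i k| ≤ B :=
    (Nat.ceil_le.mp (hBc (i, k))).trans (by exact_mod_cast (by omega : Bc ≤ B))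
  have hy {M : ℕ} (j : ι → Fin M) (i : ι) : |gridPoint a j i| ≤ B := by
    obtain ⟨hlow, hupp⟩ := gridPoint_mem_Icc a j
    have hai : |a i| ≤ Ba := Nat.ceil_le.mp (hBa i)
    have hB : (Ba : ℝ) + 1 ≤ B := by exact_mod_cast (by omega : Ba + 1 ≤ B)
    have hupp' : gridPoint a j i ≤ a i + 1 := hupp i
    exact abs_le.mpr ⟨by linarith [hlow i, neg_abs_le (a i)], by linarith [le_abs_self (a i)]⟩
  let R := 2 * (Fintype.card ι * (2 * B)) * (D + 2) + 3 + D + n₀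
  refine ⟨R, by omega, fun M j hM => ?_⟩
  have hRM : R ≤ R * M := Nat.le_mul_of_pos_right R hM
  have hbudget : 2 * (Fintype.card ι * (2 * M * B)) * (D + 2) + 3 ≤ R * M := by
    have : R * M = 2 * (Fintype.card ι * (2 * M * B)) * (D + 2) + (3 + D + n₀) * M := by ring
    have : 3 + D + n₀ ≤ (3 + D + n₀) * M := Nat.le_mul_of_pos_right _ hM
    omega
  have hh : |((R * M : ℕ) : ℝ) ^ (-α)| = ((R * M : ℕ) : ℝ) ^ (-α) := abs_of_nonneg (by positivity)
  have hh₁ : ((R * M : ℕ) : ℝ) ^ (-α) ≤ 1 := Real.rpow_le_one_of_one_le_of_nonpos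
    (by exact_mod_cast (by omega : 1 ≤ R * M)) (neg_nonpos.mpr hα)
  refine mem_DONUnitBall_of_forall_mem_DONSigma hα (fun k hk => hℓ.trans (hmono hk))
    (n := R * M) (by omega) ((continuous_tent _ _ _).comp (readout lk c).continuous)
    (fun u => (abs_tent_le (by positivity) _ _ _).trans_eq hh) fun n hn => ?_
  exact tent_readout_mem_DONSigma (Nat.succ_pos _) hc (hy j) (hh.trans_le hh₁)
    (hbudget.trans hn) (by omega) (hn₀.trans (hmono (by omega)))

end UnitBall

section RandomizedError

variable {X : Type*} {U : Set (X → ℝ)} {K : Set X} {J : Type*} [Fintype J] {G : J → X → ℝ}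

lemma ofReal_abs_sub_le_supError_add_supError {u : X} (hu : u ∈ K) (f g φ : X → ℝ) :
    ENNReal.ofReal |f u - g u| ≤ supError K f φ + supError K g φ := by
  have hle (f : X → ℝ) : ENNReal.ofReal |f u - φ u| ≤ supError K f φ :=
    le_iSup₂ (f := fun u (_ : u ∈ K) => ENNReal.ofReal |f u - φ u|) u hu
  calc ENNReal.ofReal |f u - g u|
      ≤ ENNReal.ofReal (|f u - φ u| + |g u - φ u|) := by
        rw [abs_sub_comm (g u)]
        exact ENNReal.ofReal_le_ofReal (abs_sub_le _ _ _)
    _ ≤ ENNReal.ofReal |f u - φ u| + ENNReal.ofReal |g u - φ u| := ENNReal.ofReal_add_le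
    _ ≤ supError K f φ + supError K g φ := add_le_add (hle f) (hle g)

lemma ranErrorSup_le_iSup_supError_zero (U : Set (X → ℝ)) (K : Set X) (N : ℕ) :
    ranErrorSup U K N ≤ ⨆ f ∈ U, supError K f 0 :=
  iInf_le_of_le Unit <| iInf_le_of_le inferInstance <| iInf_le_of_le (Measure.dirac ()) <|
    iInf_le_of_le inferInstance <| iInf_le_of_le (fun _ _ => 0) <| iInf_le_of_le (fun _ => 0) <|
    iInf_le_of_le measurable_const <| iInf_le_of_le (by simp) <|
    iInf_le_of_le (fun _ => ⟨Fin.elim0, Fin.rec0, fun _ => 0, fun _ _ => rfl⟩) <|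
    iInf_le_of_le (fun _ _ => measurable_const) (by simp)

open Classical in
lemma card_filter_exists_apply_ne_zero_le
    (hdisj : Pairwise (Function.onFun Disjoint fun j => Function.support (G j))) {N : ℕ}
    (pts : Fin N → X) : (Finset.univ.filter fun j => ∃ i, G j (pts i) ≠ 0).card ≤ N := by
  have hseen (j : Finset.univ.filter fun j => ∃ i, G j (pts i) ≠ 0) : ∃ i, G j (pts i) ≠ 0 :=
    (Finset.mem_filter.mp j.2).2
  choose φ hφ using hseen
  have hinj : Function.Injective φ := fun j j' hjj' => Subtype.ext <| by
    by_contra hne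
    exact Set.disjoint_left.mp (hdisj hne) (hφ j) (hjj' ▸ hφ j')
  simpa only [Fintype.card_coe, Fintype.card_fin] using Fintype.card_le_of_injective φ hinj

lemma card_mul_ofReal_le_sum_supError (h0 : (0 : X → ℝ) ∈ U) (hG : ∀ j, G j ∈ U)
    (hdisj : Pairwise (Function.onFun Disjoint fun j => Function.support (G j))) {h : ℝ}
    (hpeak : ∀ j, ∃ u ∈ K, h ≤ |G j u|) {D : Set X} {N : ℕ} {A : (X → ℝ) → X → ℝ}
    (hA : IsDetMethod U D N A) :
    Fintype.card J * ENNReal.ofReal h ≤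
      ∑ j, (supError K (G j) (A (G j)) + supError K 0 (A 0)) + ENNReal.ofReal h * N := by
  classical
  obtain ⟨pts, -, Q, hQ⟩ := hA
  let seen : Finset J := Finset.univ.filter fun j => ∃ i, G j (pts i) ≠ 0
  have hseen : seen.card ≤ N := card_filter_exists_apply_ne_zero_le hdisj pts
  have hunseen (j : J) (hj : j ∉ seen) :
      ENNReal.ofReal h ≤ supError K (G j) (A (G j)) + supError K 0 (A 0) := by
    have hvanish : ∀ i, G j (pts i) = 0 := by simpa [seen] using hj
    have hAG : A (G j) = A 0 := by simp [hQ _ (hG j), hQ _ h0, hvanish]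
    obtain ⟨u, hu, hGu⟩ := hpeak j
    rw [hAG]
    refine le_trans (ENNReal.ofReal_le_ofReal ?_)
      (ofReal_abs_sub_le_supError_add_supError hu (G j) 0 (A 0))
    simpa using hGu
  calc Fintype.card J * ENNReal.ofReal h = ∑ _j : J, ENNReal.ofReal h := by simp
    _ ≤ ∑ j, (supError K (G j) (A (G j)) + supError K 0 (A 0) +
          if j ∈ seen then ENNReal.ofReal h else 0) := by
        refine Finset.sum_le_sum fun j _ => ?_
        split_ifs with hj
        · exact le_add_self
        · simpa using hunseen j hj
    _ = ∑ j, (supError K (G j) (A (G j)) + supError K 0 (A 0)) + ENNReal.ofReal h * seen.card := by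
        rw [Finset.sum_add_distrib, Finset.sum_ite_mem, Finset.univ_inter, Finset.sum_const,
          nsmul_eq_mul, mul_comm]
    _ ≤ _ := by gcongr

lemma card_mul_ofReal_le_of_lintegral_supError_le (h0 : (0 : X → ℝ) ∈ U) (hG : ∀ j, G j ∈ U)
    (hdisj : Pairwise (Function.onFun Disjoint fun j => Function.support (G j))) {h : ℝ}
    (hpeak : ∀ j, ∃ u ∈ K, h ≤ |G j u|) {D : Set X} {N : ℕ} {Ω : Type*} [MeasurableSpace Ω]
    {P : Measure Ω} [IsProbabilityMeasure P] {A : Ω → (X → ℝ) → X → ℝ} {n : Ω → ℕ}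
    (hn : Measurable n) (hnN : ∫⁻ ω, (n ω : ℝ≥0∞) ∂P ≤ N) (hA : ∀ ω, IsDetMethod U D (n ω) (A ω))
    (hmeas : ∀ f ∈ U, Measurable fun ω => supError K f (A ω f)) {e : ℝ≥0∞}
    (he : ∀ f ∈ U, ∫⁻ ω, supError K f (A ω f) ∂P ≤ e) :
    Fintype.card J * ENNReal.ofReal h ≤ Fintype.card J * (2 * e) + ENNReal.ofReal h * N := by
  have hn' : Measurable fun ω => (n ω : ℝ≥0∞) := (measurable_of_countable _).comp hn
  calc Fintype.card J * ENNReal.ofReal h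
      = ∫⁻ _, Fintype.card J * ENNReal.ofReal h ∂P := by simp
    _ ≤ ∫⁻ ω, (∑ j, (supError K (G j) (A ω (G j)) + supError K 0 (A ω 0)) +
          ENNReal.ofReal h * n ω) ∂P :=
        lintegral_mono fun ω => card_mul_ofReal_le_sum_supError h0 hG hdisj hpeak (hA ω)
    _ = ∑ j, (∫⁻ ω, supError K (G j) (A ω (G j)) ∂P + ∫⁻ ω, supError K 0 (A ω 0) ∂P) +
          ENNReal.ofReal h * ∫⁻ ω, (n ω : ℝ≥0∞) ∂P := by
        rw [lintegral_add_right _ (hn'.const_mul _), lintegral_const_mul _ hn',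
          lintegral_finsetSum _ fun j _ => by exact (hmeas _ (hG j)).add (hmeas _ h0)]
        simp only [lintegral_add_right _ (hmeas _ h0)]
    _ ≤ ∑ _j : J, (e + e) + ENNReal.ofReal h * N := by
        gcongr with j
        · exact he _ (hG j)
        · exact he _ h0
    _ = Fintype.card J * (2 * e) + ENNReal.ofReal h * N := by simp [two_mul, mul_add]

lemma ofReal_le_four_mul_ranErrorSup [Nonempty J] (h0 : (0 : X → ℝ) ∈ U) (hG : ∀ j, G j ∈ U)
    (hdisj : Pairwise (Function.onFun Disjoint fun j => Function.support (G j))) {h : ℝ}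
    (hpeak : ∀ j, ∃ u ∈ K, h ≤ |G j u|) {N : ℕ} (hN : 2 * N ≤ Fintype.card J) :
    ENNReal.ofReal h ≤ 4 * ranErrorSup U K N := by
  rw [mul_comm, ← ENNReal.div_le_iff (by simp) (by simp)]
  simp only [ranErrorSup, le_iInf_iff]
  intro Ω _ P _ A n hn hnN hA hmeas
  rw [ENNReal.div_le_iff (by simp) (by simp), mul_comm]
  set e := ⨆ f ∈ U, ∫⁻ ω, supError K f (A ω f) ∂P
  have he : ∀ f ∈ U, ∫⁻ ω, supError K f (A ω f) ∂P ≤ e :=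
    le_iSup₂ (f := fun f (_ : f ∈ U) => ∫⁻ ω, supError K f (A ω f) ∂P)
  set m : ℝ≥0∞ := (Fintype.card J : ℝ≥0∞)
  have hm : m ≠ 0 := by simp [m]
  have hm' : m ≠ ⊤ := ENNReal.natCast_ne_top _
  have hNm : 2 * (N : ℝ≥0∞) ≤ m := by
    simp only [m]
    exact_mod_cast hN
  have havg : m * ENNReal.ofReal h ≤ m * (2 * e) + ENNReal.ofReal h * N :=
    card_mul_ofReal_le_of_lintegral_supError_le h0 hG hdisj hpeak hn hnN hA hmeas he
  have hdouble : m * ENNReal.ofReal h + m * ENNReal.ofReal h ≤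
      m * (4 * e) + m * ENNReal.ofReal h :=
    calc m * ENNReal.ofReal h + m * ENNReal.ofReal h = 2 * (m * ENNReal.ofReal h) := by ring
      _ ≤ 2 * (m * (2 * e) + ENNReal.ofReal h * N) := by gcongr
      _ = m * (4 * e) + 2 * N * ENNReal.ofReal h := by ring
      _ ≤ m * (4 * e) + m * ENNReal.ofReal h := by gcongr
  have hcancel := (ENNReal.add_le_add_iff_right (by finiteness)).mp hdouble
  exact (ENNReal.mul_le_mul_iff_right hm hm').mp hcancel

end RandomizedError

section Rates

lemma exists_mul_rpow_neg_lt_mul_rpow_neg {α γ c : ℝ} (hαγ : α < γ) (hc : 0 < c) (C : ℝ) :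
    ∃ M : ℕ, 1 ≤ M ∧ C * (M : ℝ) ^ (-γ) < (c * M) ^ (-α) := by
  have htend := (tendsto_rpow_atTop (sub_pos.mpr hαγ)).comp (tendsto_natCast_atTop_atTop (R := ℝ))
  obtain ⟨M, hM, hM₁⟩ := ((htend.eventually_gt_atTop (C * c ^ α)).and
    (Filter.eventually_ge_atTop 1)).exists
  refine ⟨M, hM₁, ?_⟩
  have hMpos : (0 : ℝ) < M := by exact_mod_cast hM₁
  have hcα : (0 : ℝ) < c ^ α := by positivity
  rw [← lt_div_iff₀ hcα] at hM
  calc C * (M : ℝ) ^ (-γ) < (M : ℝ) ^ (γ - α) / c ^ α * (M : ℝ) ^ (-γ) := by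
        gcongr
        exact hM
    _ = (c ^ α)⁻¹ * ((M : ℝ) ^ (γ - α) * (M : ℝ) ^ (-γ)) := by ring
    _ = (c * M) ^ (-α) := by
        rw [← Real.rpow_add hMpos, Real.mul_rpow hc.le hMpos.le, Real.rpow_neg hc.le]
        congr 2
        ring

variable {X : Type*} [NormedAddCommGroup X] [NormedSpace ℝ X] {lk : ℕ → X →L[ℝ] ℝ}
  {ℓ : ℕ → ℕ∞} {K : Set X} {α : ℝ}

lemma exists_ofReal_rpow_neg_le_ranErrorSup (hsep : ∀ u, (∀ k, lk k u = 0) → u = 0)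
    (hmono : Monotone ℓ) (hℓ : 1 ≤ ℓ 1) {n₀ : ℕ} (hn₀ : 3 ≤ ℓ n₀) (hconv : Convex ℝ K)
    (hfd : ¬ ∃ S : Submodule ℝ X, FiniteDimensional ℝ S ∧ K ⊆ (S : Set X)) (hα : 0 ≤ α)
    {d : ℕ} (hd : d ≠ 0) :
    ∃ c : ℝ, 0 < c ∧ ∀ M : ℕ, 1 ≤ M →
      ENNReal.ofReal ((c * M) ^ (-α)) ≤ 4 * ranErrorSup (DONUnitBall lk α ℓ) K (M ^ d) := by
  obtain ⟨D, c, a, hcube⟩ := exists_Icc_subset_readout_image hsep hconv hfd d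
  obtain ⟨R, hR, hball⟩ :=
    exists_tent_gridPoint_mem_DONUnitBall (lk := lk) hα hmono hℓ hn₀ c a
  refine ⟨R * 2, by positivity, fun M hM => ?_⟩
  have : NeZero (2 * M) := ⟨by omega⟩
  have hheight : ((R * 2 : ℝ) * M) = (R * (2 * M) : ℕ) := by push_cast; ring
  rw [hheight]
  refine ofReal_le_four_mul_ranErrorSup (J := Fin d → Fin (2 * M))
    (zero_mem_DONUnitBall lk hα fun k hk => hℓ.trans (hmono hk))
    (fun j => hball (2 * M) j (by omega)) (fun j j' hjj' => ?_) (fun j => ?_) ?_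
  · exact (pairwise_disjoint_support_tent_gridPoint a _ hjj').preimage (readout lk c)
  · obtain ⟨u, hu, huj⟩ := hcube (gridPoint_mem_Icc a j)
    exact ⟨u, hu, by rw [huj, tent_self]; exact le_abs_self _⟩
  · simpa [mul_pow] using Nat.mul_le_mul_right (M ^ d) (Nat.le_self_pow hd 2)

lemma ranErrorSup_DONUnitBall_le_one (lk : ℕ → X →L[ℝ] ℝ) (α : ℝ) (ℓ : ℕ → ℕ∞) (K : Set X)
    (N : ℕ) : ranErrorSup (DONUnitBall lk α ℓ) K N ≤ 1 := by
  refine (ranErrorSup_le_iSup_supError_zero _ K N).trans (iSup₂_le fun G hG => ?_)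
  refine iSup₂_le fun u _ => ?_
  simpa using hG.2.1 u

lemma eq_zero_of_ranErrorSup_le_rpow (hsep : ∀ u, (∀ k, lk k u = 0) → u = 0)
    (hmono : Monotone ℓ) (hℓ : 1 ≤ ℓ 1) {n₀ : ℕ} (hn₀ : 3 ≤ ℓ n₀) (hconv : Convex ℝ K)
    (hfd : ¬ ∃ S : Submodule ℝ X, FiniteDimensional ℝ S ∧ K ⊆ (S : Set X)) (hα : 0 ≤ α)
    {β C : ℝ} (hβ : 0 ≤ β) (hrate : ∀ N : ℕ, 1 ≤ N →
      ranErrorSup (DONUnitBall lk α ℓ) K N ≤ ENNReal.ofReal (C * (N : ℝ) ^ (-β))) :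
    β = 0 := by
  by_contra hne
  have hβpos : 0 < β := hβ.lt_of_ne' hne
  obtain ⟨d, hd⟩ := exists_nat_gt (α / β)
  have hd₀ : d ≠ 0 := by
    rintro rfl
    exact hd.not_ge (by simpa using div_nonneg hα hβ)
  obtain ⟨c, hc, hlow⟩ :=
    exists_ofReal_rpow_neg_le_ranErrorSup hsep hmono hℓ hn₀ hconv hfd hα hd₀
  obtain ⟨M, hM, hlt⟩ :=
    exists_mul_rpow_neg_lt_mul_rpow_neg ((div_lt_iff₀ hβpos).mp hd) hc (4 * C)
  have hpow : ((M ^ d : ℕ) : ℝ) ^ (-β) = (M : ℝ) ^ (-(d * β)) := by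
    rw [Nat.cast_pow, ← Real.rpow_natCast, ← Real.rpow_mul (by positivity), mul_neg]
  have hle : ENNReal.ofReal ((c * M) ^ (-α)) ≤ ENNReal.ofReal (4 * C * (M : ℝ) ^ (-(d * β))) :=
    calc ENNReal.ofReal ((c * M) ^ (-α))
        ≤ 4 * ranErrorSup (DONUnitBall lk α ℓ) K (M ^ d) := hlow M hM
      _ ≤ 4 * ENNReal.ofReal (C * ((M ^ d : ℕ) : ℝ) ^ (-β)) := by
          gcongr
          exact hrate _ (Nat.one_le_pow d M hM)
      _ = ENNReal.ofReal (4 * C * (M : ℝ) ^ (-(d * β))) := by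
          rw [hpow, mul_assoc, ENNReal.ofReal_mul zero_le_four, ENNReal.ofReal_ofNat]
  exact hle.not_gt ((ENNReal.ofReal_lt_ofReal_iff (by positivity)).mpr hlt)

-- The set of admissible rates is then all of `[0, ∞)`, where the real-valued `sSup` is `0`.
lemma betaStarSup_empty {X : Type*} (K : Set X) : betaStarSup (∅ : Set (X → ℝ)) K = 0 := by
  have herr (N : ℕ) : ranErrorSup (∅ : Set (X → ℝ)) K N = 0 :=
    le_zero_iff.mp ((ranErrorSup_le_iSup_supError_zero ∅ K N).trans (by simp))
  refine Real.sSup_of_not_bddAbove fun ⟨b, hb⟩ => ?_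
  have hmem : |b| + 1 ≤ b := hb ⟨by positivity, 1, one_pos, fun N _ => by simp [herr]⟩
  linarith [le_abs_self b]

end Rates

theorem don_uniform_theory_to_practice_gap_general {X : Type*} [NormedAddCommGroup X]
    [NormedSpace ℝ X] {lk : ℕ → X →L[ℝ] ℝ} {ℓ : ℕ → ℕ∞} {K : Set X} {α : ℝ}
    (hsep : ∀ u, (∀ k, lk k u = 0) → u = 0) (hmono : Monotone ℓ) (hsup : 3 ≤ ⨆ n, ℓ n)
    (hconv : Convex ℝ K)
    (hfd : ¬ ∃ S : Submodule ℝ X, FiniteDimensional ℝ S ∧ K ⊆ (S : Set X)) (hα : 0 ≤ α) :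
    betaStarSup (DONUnitBall lk α ℓ) K = 0 := by
  rcases eq_or_ne (ℓ 1) 0 with hzero | hne
  · rw [DONUnitBall_eq_empty lk α hzero, betaStarSup_empty]
  have hℓ : 1 ≤ ℓ 1 := Order.one_le_iff_ne_zero.mpr hne
  obtain ⟨n₀, hn₀⟩ : ∃ n₀, 3 ≤ ℓ n₀ := by
    obtain ⟨n₀, hlt⟩ := lt_iSup_iff.mp (lt_of_lt_of_le (by norm_num : (2 : ℕ∞) < 3) hsup)
    exact ⟨n₀, Order.add_one_le_of_lt hlt⟩
  refine IsGreatest.csSup_eq ⟨⟨le_rfl, 1, one_pos, fun N _ => ?_⟩, ?_⟩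
  · simpa using ranErrorSup_DONUnitBall_le_one lk α ℓ K N
  · rintro β ⟨hβ, C, -, hrate⟩
    exact (eq_zero_of_ranErrorSup_le_rpow hsep hmono hℓ hn₀ hconv hfd hα hβ hrate).le

/-- **Theorem (DeepONet; uniform theory-to-practice gap).** Let `ℓ` be non-decreasing
with `ℓ* ≥ 4`, `X` a separable Banach space, `{ℓ_k} ⊆ X^*` with dense span, and
`K ⊆ X` a compact convex set not contained in any finite-dimensional subspace. Then for
every `α > 0`, `β_*(𝐔^{α,∞}_{ℓ,DON}, C(K)) = 0`. -/
theorem don_uniform_theory_to_practice_gap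
    {X : Type*} [NormedAddCommGroup X] [NormedSpace ℝ X] [CompleteSpace X]
    [SecondCountableTopology X] [MeasurableSpace X] [BorelSpace X]
    (lk : ℕ → X →L[ℝ] ℝ)
    (hdense : Dense (Submodule.span ℝ (Set.range lk) : Set (X →L[ℝ] ℝ)))
    (ℓ : ℕ → ℕ∞) (hmono : Monotone ℓ) (hsup : 4 ≤ ⨆ n, ℓ n)
    (K : Set X) (hKc : IsCompact K) (hconv : Convex ℝ K)
    (hfd : ¬ ∃ S : Submodule ℝ X, FiniteDimensional ℝ S ∧ K ⊆ (S : Set X))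
    (α : ℝ) (hα : 0 < α) :
    betaStarSup (DONUnitBall lk α ℓ) K = 0 :=
  don_uniform_theory_to_practice_gap_general
    (fun _ => eq_zero_of_dense_span_of_forall_eq_zero hdense) hmono (le_trans (by norm_num) hsup)
    hconv hfd hα.le

end
end

section
/- Let D ⊂ ℝ^{d_D} be a bounded Lipschitz domain, let X(D) ⊂ L^∞(D) be a Banach space of real-valued functions on D, let d ∈ ℕ, and let μ be a Borel probability measure on X(D) satisfying Assumption (d) whose biorthogonal elements e_j* are represented by functions in L^1(D) via e_j*(u) = ∫_D u(x)e_j*(x)dx. Then there exist a shallow ReLU neural network R: ℝ × ℝ^{d_D} → ℝ^d and a constant c > 0 (depending on d) such that the encoder E: X(D) → ℝ^d defined by E(u) = ⨍_D R(u(x),x)dx satisfies E_#μ ≥ c·Unif([0,1]^d). -/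
open MeasureTheory ENNReal

noncomputable section

/-- The unit cube `[0,1]^d`. -/
def unitCube (d : ℕ) : Set (Fin d → ℝ) := Set.Icc 0 1

/-- The uniform (Lebesgue) measure on the unit cube `[0,1]^d`. -/
def cubeVol (d : ℕ) : Measure (Fin d → ℝ) := volume.restrict (unitCube d)

/-- The product measure on `ℝ^d` with density `∏_j ρ_j(z_j)` w.r.t. Lebesgue measure. -/
def productLaw {d : ℕ} (ρ : Fin d → ℝ → ℝ) : Measure (Fin d → ℝ) :=
  volume.withDensity fun z => ENNReal.ofReal (∏ j, ρ j (z j))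

/-- **Assumption (d).** The measure `μ` is the law of `u = ξ + ∑_{j=1}^d y_j e_j`,
where `e_1, …, e_d` are linearly independent with biorthogonal functionals
`e_1^*, …, e_d^*`, the coordinates `(y_1, …, y_d)` have a product law with densities
`ρ_j` each bounded below by a positive constant (a.e.) on some non-trivial interval,
and `ξ` is independent of `y` with `e_j^*(ξ) = 0` almost surely. -/
def AssumptionD {X : Type*} [NormedAddCommGroup X] [NormedSpace ℝ X] [MeasurableSpace X]
    (μ : Measure X) (d : ℕ) (e : Fin d → X) (estar : Fin d → X → ℝ) : Prop :=
  LinearIndependent ℝ e ∧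
  (∀ j k, estar j (e k) = if j = k then 1 else 0) ∧
  ∃ ρ : Fin d → ℝ → ℝ,
    (∀ j, (∀ z, 0 ≤ ρ j z) ∧ Integrable (ρ j) ∧ ∫ z, ρ j z = 1) ∧
    (∀ j, ∃ a b : ℝ, a < b ∧ ∃ ε : ℝ, 0 < ε ∧
      ∀ᵐ z ∂(volume.restrict (Set.Ioo a b)), ε ≤ ρ j z) ∧
    ∃ (Ξ : Type) (_ : MeasurableSpace Ξ) (P : Measure Ξ) (_ : IsProbabilityMeasure P)
      (y : Ξ → Fin d → ℝ) (ξv : Ξ → X),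
      Measurable y ∧ Measurable ξv ∧
      ProbabilityTheory.IndepFun y ξv P ∧
      Measure.map y P = productLaw ρ ∧
      (∀ j, ∀ᵐ ω ∂P, estar j (ξv ω) = 0) ∧
      μ = Measure.map (fun ω => ξv ω + ∑ j, y ω j • e j) P

/-!
Use one hidden neuron `σ(u(x) + t g_j(x))` per coordinate, with `g_j` affine. As `t → ∞`, on every
ball of `X` its integral differs from an affine functional with linear part `u ↦ ∫_{g_j ≥ 0} u` by
a function of arbitrarily small Lipschitz constant, because the neuron is affine in `u(x)` outside
the thin strip where `|t g_j| ≤ ‖u‖_∞`. Half-spaces separate integrable functions (Cramér–Wold),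
so the `g_j` can be chosen to make these functionals linearly independent on `span(e_1, …, e_d)`.
For `ξ` near a point of its support, `y ↦ (∫ σ(u + t g_j))_j` is then a small Lipschitz
perturbation of an invertible affine map: it covers a ball that does not depend on `ξ`. A
Lipschitz map increases Lebesgue measure at most by a constant factor, so the law of the integrals
dominates a multiple of Lebesgue measure on that ball, which the output layer rescales onto
`[0,1]^d`.
-/

open Metric Topology Filter
open scoped NNReal

section Minorization

variable {α β : Type*} [MeasurableSpace α] [MeasurableSpace β]

/-- `ν` minorizes `lam` if it dominates a nonzero multiple of `lam`. This is the relation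
`E_#μ ≥ c · Unif([0,1]^d)` with the constant hidden; allowing `c = ∞` makes it closed under
inverting constants and is harmless by `Minorizes.exists_ofReal_smul_le`. -/
def Minorizes (ν lam : Measure α) : Prop :=
  ∃ c : ℝ≥0∞, c ≠ 0 ∧ c • lam ≤ ν

lemma inv_smul_le_of_le_smul {lam ν : Measure α} {c : ℝ≥0∞} (h : lam ≤ c • ν) :
    c⁻¹ • lam ≤ ν :=
  calc c⁻¹ • lam ≤ c⁻¹ • c • ν := by gcongr
    _ = (c⁻¹ * c) • ν := (mul_smul _ _ _).symm
    _ ≤ (1 : ℝ≥0∞) • ν := by gcongr; exact ENNReal.inv_mul_le_one c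
    _ = ν := one_smul _ _

namespace Minorizes

variable {ν lam η : Measure α}

lemma trans (h₁ : Minorizes ν lam) (h₂ : Minorizes lam η) : Minorizes ν η := by
  obtain ⟨a, ha, haν⟩ := h₁
  obtain ⟨b, hb, hblam⟩ := h₂
  refine ⟨a * b, mul_ne_zero ha hb, ?_⟩
  rw [mul_smul]
  exact le_trans (by gcongr) haν

lemma of_le_smul {c : ℝ≥0∞} (hc : c ≠ ∞) (h : lam ≤ c • ν) : Minorizes ν lam :=
  ⟨c⁻¹, ENNReal.inv_ne_zero.2 hc, inv_smul_le_of_le_smul h⟩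

lemma map (h : Minorizes ν lam) {f : α → β} (hf : Measurable f) :
    Minorizes (ν.map f) (lam.map f) := by
  obtain ⟨c, hc, hcν⟩ := h
  exact ⟨c, hc, by simpa only [Measure.map_smul] using Measure.map_mono hcν hf⟩

lemma exists_ofReal_smul_le (h : Minorizes ν lam) :
    ∃ c : ℝ, 0 < c ∧ ENNReal.ofReal c • lam ≤ ν := by
  obtain ⟨c, hc, hcν⟩ := h
  have hfin : min c 1 ≠ ∞ := ne_top_of_le_ne_top one_ne_top (min_le_right c 1)
  have hpos : min c 1 ≠ 0 := (lt_min (pos_iff_ne_zero.2 hc) one_pos).ne'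
  refine ⟨(min c 1).toReal, ENNReal.toReal_pos hpos hfin, ?_⟩
  rw [ENNReal.ofReal_toReal hfin]
  exact le_trans (by gcongr; exact min_le_left c 1) hcν

end Minorizes

lemma measure_smul_le_map_prod {γ : Type*} [MeasurableSpace γ] {ν : Measure α} {κ : Measure β}
    [SFinite ν] [SFinite κ] {lam : Measure γ} {Ψ : α × β → γ} (hΨ : Measurable Ψ) {U : Set β}
    (hU : MeasurableSet U) (h : ∀ b ∈ U, lam ≤ ν.map fun a => Ψ (a, b)) :
    κ U • lam ≤ (ν.prod κ).map Ψ := by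
  refine Measure.le_iff.2 fun B hB => ?_
  rw [Measure.map_apply hΨ hB, Measure.prod_apply_symm (hΨ hB), Measure.smul_apply, smul_eq_mul]
  have slice_le : ∀ b ∈ U, lam B ≤ ν ((fun a => (a, b)) ⁻¹' (Ψ ⁻¹' B)) := fun b hb => by
    have hΨb : Measurable fun a => Ψ (a, b) := hΨ.comp measurable_prodMk_right
    have hle := h b hb B
    rwa [Measure.map_apply hΨb hB] at hle
  calc κ U * lam B = ∫⁻ _ in U, lam B ∂κ := by rw [setLIntegral_const, mul_comm]
    _ ≤ ∫⁻ b in U, ν ((fun a => (a, b)) ⁻¹' (Ψ ⁻¹' B)) ∂κ := setLIntegral_mono' hU slice_le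
    _ ≤ ∫⁻ b, ν ((fun a => (a, b)) ⁻¹' (Ψ ⁻¹' B)) ∂κ := setLIntegral_le_lintegral _ _

lemma Minorizes.map_prod {γ : Type*} [MeasurableSpace γ] {ν η : Measure α} {κ : Measure β}
    [SFinite ν] [SFinite κ] {lam : Measure γ} {Ψ : α × β → γ} (hΨ : Measurable Ψ)
    (hν : Minorizes ν η) {U : Set β} (hU : MeasurableSet U) (hκU : κ U ≠ 0) {c : ℝ≥0∞}
    (hc : c ≠ ∞) (h : ∀ b ∈ U, lam ≤ c • η.map fun a => Ψ (a, b)) :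
    Minorizes ((ν.prod κ).map Ψ) lam := by
  obtain ⟨a, ha, haν⟩ := hν
  have slice_le : ∀ b ∈ U, (a * c⁻¹) • lam ≤ ν.map fun x => Ψ (x, b) := fun b hb =>
    calc (a * c⁻¹) • lam = a • c⁻¹ • lam := mul_smul _ _ _
      _ ≤ a • η.map fun x => Ψ (x, b) := by gcongr; exact inv_smul_le_of_le_smul (h b hb)
      _ = (a • η).map fun x => Ψ (x, b) := (Measure.map_smul ..).symm
      _ ≤ ν.map fun x => Ψ (x, b) := Measure.map_mono haν (hΨ.comp measurable_prodMk_right)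
  refine ⟨κ U * (a * c⁻¹), mul_ne_zero hκU (mul_ne_zero ha (ENNReal.inv_ne_zero.2 hc)), ?_⟩
  rw [mul_smul]
  exact measure_smul_le_map_prod hΨ hU slice_le

end Minorization

section LipschitzSurjection

variable {ι : Type*} [Fintype ι]

lemma volume_restrict_le_smul_map_of_lipschitzOnWith {φ : (ι → ℝ) → ι → ℝ} (hφ : Measurable φ)
    {K : ℝ≥0} {Q S : Set (ι → ℝ)} (hlip : LipschitzOnWith K φ Q) (hsurj : S ⊆ φ '' Q) :
    volume.restrict S ≤ (K : ℝ≥0∞) ^ Fintype.card ι • (volume.restrict Q).map φ := by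
  refine Measure.le_iff.2 fun B hB => ?_
  have hsub : B ∩ S ⊆ φ '' (φ ⁻¹' B ∩ Q) := by
    rintro _ ⟨hB, hS⟩
    obtain ⟨y, hy, rfl⟩ := hsurj hS
    exact ⟨y, ⟨hB, hy⟩, rfl⟩
  have himage := (hlip.mono Set.inter_subset_right).hausdorffMeasure_image_le
    (s := φ ⁻¹' B ∩ Q) (d := Fintype.card ι) (Nat.cast_nonneg _)
  rw [hausdorffMeasure_pi_real, ENNReal.rpow_natCast] at himage
  rw [Measure.restrict_apply hB, Measure.smul_apply, Measure.map_apply hφ hB,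
    Measure.restrict_apply (hφ hB), smul_eq_mul]
  exact (measure_mono hsub).trans himage

lemma minorizes_map_prod_of_eventually_lipschitzOnWith {X : Type*} [PseudoMetricSpace X]
    [SecondCountableTopology X] [MeasurableSpace X] [BorelSpace X] {ν : Measure (ι → ℝ)}
    {κ : Measure X} [SFinite ν] [SFinite κ] {Ψ : (ι → ℝ) × X → ι → ℝ} (hΨ : Continuous Ψ)
    {z₀ : ι → ℝ} {ξ₀ : X} {r s : ℝ} {K : ℝ≥0} (hs : 0 < s)
    (hν : Minorizes ν (volume.restrict (closedBall z₀ r))) (hξ₀ : ξ₀ ∈ κ.support)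
    (hlip : ∀ᶠ ξ in 𝓝 ξ₀, LipschitzOnWith K (fun z => Ψ (z, ξ)) (closedBall z₀ r))
    (hsurj : ∀ᶠ ξ in 𝓝 ξ₀,
      closedBall (Ψ (z₀, ξ)) s ⊆ (fun z => Ψ (z, ξ)) '' closedBall z₀ r) :
    Minorizes ((ν.prod κ).map Ψ) (volume.restrict (closedBall (Ψ (z₀, ξ₀)) (s / 2))) := by
  have hclose : ∀ᶠ ξ in 𝓝 ξ₀, dist (Ψ (z₀, ξ₀)) (Ψ (z₀, ξ)) < s / 2 := by
    have hcont : Continuous fun ξ => dist (Ψ (z₀, ξ₀)) (Ψ (z₀, ξ)) := by fun_prop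
    exact hcont.continuousAt.eventually_lt_const (by simpa using half_pos hs)
  obtain ⟨U, hU, hUopen, hξ₀U⟩ := _root_.mem_nhds_iff.1 (hlip.and (hsurj.and hclose))
  have hκU : κ U ≠ 0 :=
    ((Measure.mem_support_iff_forall ξ₀).1 hξ₀ U (hUopen.mem_nhds hξ₀U)).ne'
  refine hν.map_prod hΨ.measurable hUopen.measurableSet hκU
    (ENNReal.pow_ne_top (coe_ne_top (r := K)) (n := Fintype.card ι)) fun ξ hξ => ?_
  obtain ⟨hlipξ, hsurjξ, hcloseξ⟩ := hU hξ
  have hball : closedBall (Ψ (z₀, ξ₀)) (s / 2) ⊆ closedBall (Ψ (z₀, ξ)) s :=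
    closedBall_subset_closedBall' (by linarith)
  exact volume_restrict_le_smul_map_of_lipschitzOnWith (by fun_prop) hlipξ (hball.trans hsurjξ)

lemma minorizes_map_rescale_closedBall_cubeVol {d : ℕ} (y₀ : Fin d → ℝ) {s : ℝ} (hs : 0 < s) :
    Minorizes ((volume.restrict (closedBall y₀ s)).map
      fun y j => (2 * s)⁻¹ * y j + (1 / 2 - (2 * s)⁻¹ * y₀ j)) (cubeVol d) := by
  refine Minorizes.of_le_smul (ENNReal.pow_ne_top coe_ne_top)
    (volume_restrict_le_smul_map_of_lipschitzOnWith (K := (2 * s)⁻¹.toNNReal) (by fun_prop) ?_ ?_)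
  · refine LipschitzOnWith.of_dist_le_mul fun y _ y' _ => ?_
    rw [Real.coe_toNNReal _ (by positivity)]
    refine (dist_pi_le_iff (by positivity)).2 fun j => ?_
    rw [dist_add_right, Real.dist_eq, ← mul_sub, abs_mul, abs_of_pos (by positivity),
      ← Real.dist_eq]
    gcongr
    exact dist_le_pi_dist y y' j
  · intro w hw
    refine ⟨fun j => y₀ j + 2 * s * (w j - 1 / 2), ?_, ?_⟩
    · refine mem_closedBall.2 ((dist_pi_le_iff hs.le).2 fun j => ?_)
      have hw0 : 0 ≤ w j := hw.1 j
      have hw1 : w j ≤ 1 := hw.2 j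
      rw [Real.dist_eq, abs_le]
      constructor <;> nlinarith
    · funext j
      field_simp
      ring

end LipschitzSurjection

section LinearApproximation

variable {F F' : Type*} [NormedAddCommGroup F] [NormedSpace ℝ F]
  [NormedAddCommGroup F'] [NormedSpace ℝ F']

lemma exists_pos_closedBall_subset_image_of_approximatesLinearOn [CompleteSpace F]
    (M : F ≃L[ℝ] F') :
    ∃ c : ℝ≥0, 0 < c ∧ ∀ {f : F → F'} {b : F} {r : ℝ}, 0 ≤ r →
      ApproximatesLinearOn f (M : F →L[ℝ] F') (closedBall b r) c →
        closedBall (f b) (c * r) ⊆ f '' closedBall b r := by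
  -- Enlarging the norm of the inverse keeps it nonzero when `F` is trivial.
  let N : ℝ≥0 := ‖(M.symm : F' →L[ℝ] F)‖₊ + 1
  let rightInverse : (M : F →L[ℝ] F').NonlinearRightInverse :=
    { toFun := M.symm
      nnnorm := N
      bound' := fun y => (M.symm : F' →L[ℝ] F).le_of_opNorm_le (by simp [N]) y
      right_inv' := M.apply_symm_apply }
  refine ⟨N⁻¹ / 2, by positivity, fun {f b r} hr hf => ?_⟩
  have hsurj := hf.surjOn_closedBall_of_nonlinearRightInverse rightInverse hr subset_rfl
  have hradius : ((N : ℝ)⁻¹ - (N⁻¹ / 2 : ℝ≥0)) * r = (N⁻¹ / 2 : ℝ≥0) * r := by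
    push_cast
    ring
  rw [← hradius]
  exact hsurj

end LinearApproximation

section HalfSpaces

variable {E : Type*} [NormedAddCommGroup E] [NormedSpace ℝ E]

/-- The closed half-space on which the affine form `g` is nonnegative; a constant form
gives `∅` or the whole space. -/
def halfSpace (g : E →ᴬ[ℝ] ℝ) : Set E := {x | 0 ≤ g x}

lemma halfSpace_smul (g : E →ᴬ[ℝ] ℝ) {t : ℝ} (ht : 0 < t) : halfSpace (t • g) = halfSpace g := by
  ext x
  simp [halfSpace, ht]

variable [MeasurableSpace E] [BorelSpace E]

lemma measurableSet_halfSpace (g : E →ᴬ[ℝ] ℝ) : MeasurableSet (halfSpace g) :=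
  measurableSet_le measurable_const g.continuous.measurable

lemma measure_ext_of_halfSpace [SecondCountableTopology E] [CompleteSpace E] {μ ν : Measure E}
    [IsFiniteMeasure μ] [IsFiniteMeasure ν]
    (h : ∀ g : E →ᴬ[ℝ] ℝ, μ (halfSpace g) = ν (halfSpace g)) : μ = ν := by
  refine Measure.ext_of_charFunDual (funext fun L => ?_)
  -- Cramér–Wold: it suffices to compare the laws of the linear forms.
  suffices μ.map L = ν.map L by
    rw [charFunDual_eq_charFun_map_one, charFunDual_eq_charFun_map_one, this]
  refine Measure.ext_of_Ici _ _ fun a => ?_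
  have hpre : L ⁻¹' Set.Ici a =
      halfSpace (L.toContinuousAffineMap - ContinuousAffineMap.const ℝ E a) := by
    ext x
    simp [halfSpace]
  rw [Measure.map_apply (by fun_prop) measurableSet_Ici,
    Measure.map_apply (by fun_prop) measurableSet_Ici, hpre, h]

lemma ae_eq_zero_of_setIntegral_halfSpace_eq_zero [SecondCountableTopology E] [CompleteSpace E]
    {m : Measure E} {w : E → ℝ} (hw : Integrable w m)
    (h : ∀ g : E →ᴬ[ℝ] ℝ, g ≠ 0 → ∫ x in halfSpace g, w x ∂m = 0) : w =ᵐ[m] 0 := by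
  have h_all (g : E →ᴬ[ℝ] ℝ) : ∫ x in halfSpace g, w x ∂m = 0 := by
    rcases eq_or_ne g 0 with rfl | hg
    · have hone : halfSpace (0 : E →ᴬ[ℝ] ℝ) = halfSpace (ContinuousAffineMap.const ℝ E 1) := by
        simp [halfSpace]
      exact hone ▸ h _ fun h0 => one_ne_zero (DFunLike.congr_fun h0 0)
    · exact h g hg
  have := isFiniteMeasure_withDensity_ofReal hw.2
  have := isFiniteMeasure_withDensity_ofReal hw.neg.2
  have hparts : m.withDensity (fun x => ENNReal.ofReal (w x)) =
      m.withDensity fun x => ENNReal.ofReal ((-w) x) := by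
    refine measure_ext_of_halfSpace fun g => ?_
    have hint := h_all g
    rw [integral_eq_lintegral_pos_part_sub_lintegral_neg_part hw.restrict, sub_eq_zero] at hint
    rw [withDensity_apply _ (measurableSet_halfSpace g),
      withDensity_apply _ (measurableSet_halfSpace g)]
    exact (ENNReal.toReal_eq_toReal_iff' hw.restrict.lintegral_lt_top.ne
      hw.neg.restrict.lintegral_lt_top.ne).1 hint
  filter_upwards [(withDensity_eq_iff (by fun_prop) (by fun_prop)
    hw.lintegral_lt_top.ne).1 hparts] with x hx
  have hpos : max (w x) 0 = max (-w x) 0 := by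
    simpa [ENNReal.toReal_ofReal'] using congrArg ENNReal.toReal hx
  rw [Pi.zero_apply, ← max_zero_sub_max_neg_zero_eq_self (w x), hpos, sub_self]

lemma addHaar_affine_zeroSet_eq_zero [FiniteDimensional ℝ E] (μ : Measure E)
    [μ.IsAddHaarMeasure] {g : E →ᴬ[ℝ] ℝ} (hg : g ≠ 0) : μ {x | g x = 0} = 0 := by
  let S : AffineSubspace ℝ E := (AffineSubspace.mk' (0 : ℝ) ⊥).comap (g : E →ᵃ[ℝ] ℝ)
  have hS : {x | g x = 0} = (S : Set E) := by
    ext x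
    simp [S]
  rw [hS]
  refine Measure.addHaar_affineSubspace μ S fun htop => hg (ContinuousAffineMap.ext fun x => ?_)
  have hx : x ∈ {x | g x = 0} := by simp [hS, htop]
  exact hx

lemma tendsto_measureReal_strip_smul_atTop {m : Measure E} [IsFiniteMeasure m] {g : E →ᴬ[ℝ] ℝ}
    (hg : m {x | g x = 0} = 0) (r : ℝ) :
    Tendsto (fun t : ℝ => m.real {x | |(t • g) x| ≤ r}) atTop (𝓝 0) := by
  have hescape : ∀ᵐ x ∂m, ∀ᶠ t : ℝ in atTop, x ∈ {x | |(t • g) x| ≤ r} ↔ x ∈ (∅ : Set E) := by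
    filter_upwards [measure_eq_zero_iff_ae_notMem.1 hg] with x hx
    have htendsto : Tendsto (fun t : ℝ => |t| * |g x|) atTop atTop :=
      tendsto_abs_atTop_atTop.atTop_mul_const (abs_pos.2 hx)
    filter_upwards [htendsto.eventually_gt_atTop r] with t ht
    simpa [abs_mul] using ht
  have hmeas (t : ℝ) : MeasurableSet {x | |(t • g) x| ≤ r} :=
    measurableSet_le (t • g).continuous.abs.measurable measurable_const
  have hlim := tendsto_measure_of_ae_tendsto_indicator_of_isFiniteMeasure atTop
    MeasurableSet.empty hmeas hescape
  rw [measure_empty] at hlim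
  exact (ENNReal.tendsto_toReal zero_ne_top).comp hlim

end HalfSpaces

section SeparatingFunctionals

open Module in
lemma exists_injective_pi_of_separating {K V I ι : Type*} [Field K] [AddCommGroup V] [Module K V]
    [FiniteDimensional K V] [Fintype ι] (ℓ : I → V →ₗ[K] K)
    (hℓ : ∀ v, (∀ i, ℓ i v = 0) → v = 0) (hι : Fintype.card ι = finrank K V) :
    ∃ p : ι → I, Function.Injective (LinearMap.pi fun i => ℓ (p i)) := by
  obtain ⟨J, a, -, hspan, hind⟩ := exists_linearIndependent' K ℓ
  have := hind.finite_of_isNoetherian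
  have := Fintype.ofFinite J
  have hJ : Fintype.card J = finrank K V := by
    have hzero : (Submodule.span K (Set.range ℓ)).dualCoannihilator = ⊥ := by
      refine (Submodule.eq_bot_iff _).2 fun v hv => hℓ v fun i => ?_
      exact (Submodule.mem_dualCoannihilator v).1 hv _ (Submodule.subset_span ⟨i, rfl⟩)
    have hsum := Subspace.finrank_add_finrank_dualCoannihilator_eq
      (Submodule.span K (Set.range ℓ))
    rw [hzero, finrank_bot, add_zero, ← hspan, finrank_span_eq_card hind] at hsum
    exact hsum
  let σ : ι ≃ J := Fintype.equivOfCardEq (hι.trans hJ.symm)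
  refine ⟨a ∘ σ, (injective_iff_map_eq_zero _).2 fun v hv => hℓ v fun i => ?_⟩
  have hker : Set.range (ℓ ∘ a) ⊆ LinearMap.ker (Dual.eval K V v) := by
    rintro _ ⟨j, rfl⟩
    simpa using congrFun hv (σ.symm j)
  have hmem : ℓ i ∈ Submodule.span K (Set.range (ℓ ∘ a)) :=
    hspan ▸ Submodule.subset_span ⟨i, rfl⟩
  exact Submodule.span_le.2 hker hmem

end SeparatingFunctionals

section ReLU

lemma abs_relu_sub_relu_le (s t : ℝ) : |relu s - relu t| ≤ |s - t| := by
  simpa [relu] using abs_max_sub_max_le_abs s t 0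

lemma relu_sub_self (t : ℝ) : relu t - t = relu (-t) := by
  simp [relu, sub_eq_add_neg, max_add, max_comm]

lemma abs_relu_add_sub_relu_add_sub_ite_le (a a' t : ℝ) :
    |relu (a + t) - relu (a' + t) - if 0 ≤ t then a - a' else 0| ≤ |a - a'| := by
  split_ifs
  · calc |relu (a + t) - relu (a' + t) - (a - a')| = |relu (-(a + t)) - relu (-(a' + t))| := by
          rw [← relu_sub_self, ← relu_sub_self]; ring_nf
      _ ≤ |-(a + t) - -(a' + t)| := abs_relu_sub_relu_le _ _
      _ = |a - a'| := by rw [abs_sub_comm]; ring_nf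
  · simpa using abs_relu_sub_relu_le (a + t) (a' + t)

lemma relu_add_sub_relu_add_of_lt_abs {a a' t r : ℝ} (ha : |a| ≤ r) (ha' : |a'| ≤ r)
    (ht : r < |t|) : relu (a + t) - relu (a' + t) = if 0 ≤ t then a - a' else 0 := by
  obtain ⟨hra, har⟩ := abs_le.1 ha
  obtain ⟨hra', har'⟩ := abs_le.1 ha'
  split_ifs with h0
  · rw [abs_of_nonneg h0] at ht
    rw [relu, relu, max_eq_left (by linarith), max_eq_left (by linarith), add_sub_add_right_eq_sub]
  · rw [abs_of_neg (not_le.1 h0)] at ht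
    rw [relu, relu, max_eq_right (by linarith), max_eq_right (by linarith), sub_self]

end ReLU

section NeuronIntegral

variable {E : Type*} [NormedAddCommGroup E] [NormedSpace ℝ E] [MeasurableSpace E]

/-- One coordinate of the encoder, before the outer affine layer: the integral over the domain of
the neuron with affine form `g` and unit weight on the function value. -/
def neuronIntegral (m : Measure E) (g : E →ᴬ[ℝ] ℝ) (f : E → ℝ) : ℝ :=
  ∫ x, relu (f x + g x) ∂m

variable {m : Measure E} [IsFiniteMeasure m] {g : E →ᴬ[ℝ] ℝ} {f f' : E → ℝ}

lemma integrable_continuousAffineMap (hm : Integrable id m) (g : E →ᴬ[ℝ] ℝ) : Integrable g m := by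
  rw [g.decomp]
  exact (g.contLinear.integrable_comp hm).add (integrable_const _)

lemma integrable_neuron (hm : Integrable id m) (hf : Integrable f m) :
    Integrable (fun x => relu (f x + g x)) m :=
  (hf.add (integrable_continuousAffineMap hm g)).pos_part

lemma abs_neuronIntegral_sub_le (hm : Integrable id m) (hf : Integrable f m)
    (hf' : Integrable f' m) {s : ℝ} (hs : ∀ᵐ x ∂m, |f x - f' x| ≤ s) :
    |neuronIntegral m g f - neuronIntegral m g f'| ≤ s * m.real Set.univ := by
  rw [neuronIntegral, neuronIntegral,
    ← integral_sub (integrable_neuron hm hf) (integrable_neuron hm hf'), ← Real.norm_eq_abs]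
  refine norm_integral_le_of_norm_le_const (hs.mono fun x hx => ?_)
  calc |relu (f x + g x) - relu (f' x + g x)| ≤ |f x + g x - (f' x + g x)| :=
        abs_relu_sub_relu_le _ _
    _ = |f x - f' x| := by rw [add_sub_add_right_eq_sub]
    _ ≤ s := hx

lemma abs_neuronIntegral_sub_sub_setIntegral_halfSpace_le [BorelSpace E] (hm : Integrable id m)
    (hf : Integrable f m) (hf' : Integrable f' m) {r s : ℝ} (hfr : ∀ᵐ x ∂m, |f x| ≤ r)
    (hf'r : ∀ᵐ x ∂m, |f' x| ≤ r) (hs : ∀ᵐ x ∂m, |f x - f' x| ≤ s) :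
    |neuronIntegral m g f - neuronIntegral m g f' - ∫ x in halfSpace g, (f x - f' x) ∂m| ≤
      s * m.real {x | |g x| ≤ r} := by
  let strip : Set E := {x | |g x| ≤ r}
  let defect : E → ℝ := fun x =>
    relu (f x + g x) - relu (f' x + g x) - (halfSpace g).indicator (fun x => f x - f' x) x
  have hint : neuronIntegral m g f - neuronIntegral m g f' -
      ∫ x in halfSpace g, (f x - f' x) ∂m = ∫ x, defect x ∂m := by
    rw [neuronIntegral, neuronIntegral, ← integral_indicator (measurableSet_halfSpace g),
      ← integral_sub (integrable_neuron hm hf) (integrable_neuron hm hf')]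
    exact (integral_sub ((integrable_neuron hm hf).sub (integrable_neuron hm hf'))
      ((hf.sub hf').indicator (measurableSet_halfSpace g))).symm
  have hdefect (x : E) : defect x = relu (f x + g x) - relu (f' x + g x) -
      if 0 ≤ g x then f x - f' x else 0 := by
    simp [defect, Set.indicator_apply, halfSpace]
  have hsupp : ∀ᵐ x ∂m, x ∉ strip → defect x = 0 := by
    filter_upwards [hfr, hf'r] with x hx hx' hxs
    rw [hdefect, relu_add_sub_relu_add_of_lt_abs hx hx' (not_le.1 hxs), sub_self]
  rw [hint, ← setIntegral_eq_integral_of_ae_compl_eq_zero hsupp, ← Real.norm_eq_abs]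
  refine norm_setIntegral_le_of_norm_le_const_ae' (measure_lt_top _ _) (hs.mono fun x hx _ => ?_)
  rw [Real.norm_eq_abs, hdefect]
  exact (abs_relu_add_sub_relu_add_sub_ite_le _ _ _).trans hx

end NeuronIntegral

section BoundedRealization

variable {E : Type*} [MeasurableSpace E] {X : Type*} [NormedAddCommGroup X] [NormedSpace ℝ X]

/-- A linear realization of the elements of the normed space `X` as functions on `E` that is
bounded by `C` as a map into `L^∞(m)`. It models an inclusion `X(D) ⊂ L^∞(D)`. -/
structure IsBoundedRealization (m : Measure E) (ι : X →ₗ[ℝ] E → ℝ) (C : ℝ≥0) : Prop where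
  aestronglyMeasurable (u : X) : AEStronglyMeasurable (ι u) m
  ae_abs_le (u : X) : ∀ᵐ x ∂m, |ι u x| ≤ C * ‖u‖

namespace IsBoundedRealization

variable {m : Measure E} {ι : X →ₗ[ℝ] E → ℝ} {C : ℝ≥0}

lemma ae_abs_sub_le (hι : IsBoundedRealization m ι C) (u v : X) :
    ∀ᵐ x ∂m, |ι u x - ι v x| ≤ C * ‖u - v‖ := by
  simpa using hι.ae_abs_le (u - v)

variable [IsFiniteMeasure m]

lemma integrable (hι : IsBoundedRealization m ι C) (u : X) : Integrable (ι u) m :=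
  .of_bound (hι.aestronglyMeasurable u) (C * ‖u‖) (hι.ae_abs_le u)

variable [NormedAddCommGroup E] [NormedSpace ℝ E]

/-- The continuous linear functional `u ↦ ∫_{g ≥ 0} u`, the linearization of a neuron integral
with a steep affine form. -/
def halfSpaceFunctional (hι : IsBoundedRealization m ι C) (g : E →ᴬ[ℝ] ℝ) : X →L[ℝ] ℝ :=
  LinearMap.mkContinuous
    { toFun := fun u => ∫ x in halfSpace g, ι u x ∂m
      map_add' := fun u v => by
        simpa using integral_add (hι.integrable u).restrict (hι.integrable v).restrict
      map_smul' := fun a u => by simpa using integral_const_mul a (ι u) }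
    (C * m.real (halfSpace g)) fun u => by
      rw [mul_right_comm, ← measureReal_restrict_apply_univ]
      exact norm_integral_le_of_norm_le_const (ae_restrict_of_ae (hι.ae_abs_le u))

lemma halfSpaceFunctional_apply (hι : IsBoundedRealization m ι C) (g : E →ᴬ[ℝ] ℝ) (u : X) :
    hι.halfSpaceFunctional g u = ∫ x in halfSpace g, ι u x ∂m := rfl

lemma lipschitzWith_neuronIntegral (hι : IsBoundedRealization m ι C) (hm : Integrable id m)
    (g : E →ᴬ[ℝ] ℝ) :
    LipschitzWith (C * (m Set.univ).toNNReal) fun u => neuronIntegral m g (ι u) := by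
  refine LipschitzWith.of_dist_le_mul fun u v => ?_
  rw [Real.dist_eq, dist_eq_norm, NNReal.coe_mul, mul_right_comm]
  exact abs_neuronIntegral_sub_le hm (hι.integrable u) (hι.integrable v) (hι.ae_abs_sub_le u v)

lemma eventually_approximatesLinearOn_neuronIntegral [BorelSpace E]
    (hι : IsBoundedRealization m ι C)
    (hm : Integrable id m) {g : E →ᴬ[ℝ] ℝ} (hg : m {x | g x = 0} = 0) (R : ℝ) {c : ℝ≥0}
    (hc : 0 < c) :
    ∀ᶠ t : ℝ in atTop, ApproximatesLinearOn (fun u => neuronIntegral m (t • g) (ι u))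
      (hι.halfSpaceFunctional g) (closedBall 0 R) c := by
  have hthin : ∀ᶠ t : ℝ in atTop, C * m.real {x | |(t • g) x| ≤ C * R} < c := by
    have hlim := (tendsto_measureReal_strip_smul_atTop hg (C * R)).const_mul (C : ℝ)
    rw [mul_zero] at hlim
    exact hlim.eventually_lt_const (by exact_mod_cast hc)
  filter_upwards [hthin, eventually_gt_atTop 0] with t ht ht0 u hu v hv
  have hbound {w : X} (hw : w ∈ closedBall (0 : X) R) : ∀ᵐ x ∂m, |ι w x| ≤ C * R :=
    (hι.ae_abs_le w).mono fun x hx => hx.trans (by gcongr; simpa using hw)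
  have herr := abs_neuronIntegral_sub_sub_setIntegral_halfSpace_le (g := t • g) hm
    (hι.integrable u) (hι.integrable v) (hbound hu) (hbound hv) (hι.ae_abs_sub_le u v)
  rw [halfSpace_smul g ht0] at herr
  have hlin : hι.halfSpaceFunctional g (u - v) = ∫ x in halfSpace g, (ι u x - ι v x) ∂m := by
    simp [halfSpaceFunctional_apply]
  rw [Real.norm_eq_abs, hlin]
  refine herr.trans ?_
  rw [mul_right_comm]
  gcongr

end IsBoundedRealization

end BoundedRealization

section MixtureOfPerturbations

variable {F F' X ι : Type*} [NormedAddCommGroup F] [NormedSpace ℝ F]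
  [NormedAddCommGroup F'] [NormedSpace ℝ F'] [NormedAddCommGroup X] [NormedSpace ℝ X] [Fintype ι]

lemma approximatesLinearOn_pi {f : ι → F → ℝ} {L : ι → F →L[ℝ] ℝ} {s : Set F} {c : ℝ≥0}
    (h : ∀ i, ApproximatesLinearOn (f i) (L i) s c) :
    ApproximatesLinearOn (fun x i => f i x) (ContinuousLinearMap.pi L) s c :=
  fun x hx y hy => (pi_norm_le_iff_of_nonneg (by positivity)).2 fun i => h i x hx y hy

lemma approximatesLinearOn_comp_const_add {f : X → F'} {L : X →L[ℝ] F'} {s : Set X} {c : ℝ≥0}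
    (h : ApproximatesLinearOn f L s c) (T : F →L[ℝ] X) (ξ : X) {t : Set F}
    (ht : Set.MapsTo (fun z => ξ + T z) t s) :
    ApproximatesLinearOn (fun z => f (ξ + T z)) (L.comp T) t (c * ‖T‖₊) := fun z hz z' hz' =>
  calc ‖f (ξ + T z) - f (ξ + T z') - L (T (z - z'))‖
      = ‖f (ξ + T z) - f (ξ + T z') - L (ξ + T z - (ξ + T z'))‖ := by
        rw [add_sub_add_left_eq_sub, map_sub]
    _ ≤ c * ‖ξ + T z - (ξ + T z')‖ := h _ (ht hz) _ (ht hz')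
    _ = c * ‖T (z - z')‖ := by rw [add_sub_add_left_eq_sub, map_sub]
    _ ≤ (c * ‖T‖₊ : ℝ≥0) * ‖z - z'‖ := by
        rw [NNReal.coe_mul, mul_assoc]
        gcongr
        exact T.le_opNorm _

lemma exists_pos_eventually_closedBall_subset_image [CompleteSpace F] {T : F →L[ℝ] X}
    {L : X →L[ℝ] F'} (M : F ≃L[ℝ] F') (hM : L.comp T = M) (z₀ : F) {r : ℝ} (hr : 0 < r) (ξ₀ : X) :
    ∃ (R s : ℝ) (c : ℝ≥0), 0 < s ∧ 0 < c ∧ ∀ {Φ : X → F'},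
      ApproximatesLinearOn Φ L (closedBall 0 R) c →
        ∀ᶠ ξ in 𝓝 ξ₀, closedBall (Φ (ξ + T z₀)) s ⊆ (fun z => Φ (ξ + T z)) '' closedBall z₀ r := by
  obtain ⟨c, hc, hsurj⟩ := exists_pos_closedBall_subset_image_of_approximatesLinearOn M
  refine ⟨‖ξ₀‖ + 1 + ‖T‖ * (‖z₀‖ + r), c * r, c / (‖T‖₊ + 1), by positivity, by positivity,
    fun {Φ} happrox => ?_⟩
  filter_upwards [ball_mem_nhds ξ₀ one_pos] with ξ hξ
  have hmaps : Set.MapsTo (fun z => ξ + T z) (closedBall z₀ r)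
      (closedBall 0 (‖ξ₀‖ + 1 + ‖T‖ * (‖z₀‖ + r))) := fun z hz => by
    have hξnorm : ‖ξ‖ ≤ ‖ξ₀‖ + 1 := norm_le_of_mem_closedBall (ball_subset_closedBall hξ)
    rw [mem_closedBall_zero_iff]
    refine (norm_add_le _ _).trans (add_le_add hξnorm ((T.le_opNorm z).trans ?_))
    gcongr
    exact norm_le_of_mem_closedBall hz
  have hcT : c / (‖T‖₊ + 1) * ‖T‖₊ ≤ c := by
    rw [div_mul_eq_mul_div, div_le_iff₀ (by positivity)]
    gcongr
    exact le_self_add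
  have hcomp := (approximatesLinearOn_comp_const_add happrox T ξ hmaps).mono_num hcT
  rw [hM] at hcomp
  exact hsurj hr.le hcomp

lemma exists_minorizes_of_approximatesLinearOn [SecondCountableTopology X] [MeasurableSpace X]
    [BorelSpace X] {ν : Measure (ι → ℝ)} {κ : Measure X} [SFinite ν] [SFinite κ] (hκ : κ ≠ 0)
    {U : Set (ι → ℝ)} (hUopen : IsOpen U) (hUne : U.Nonempty)
    (hν : Minorizes ν (volume.restrict U)) {T : (ι → ℝ) →L[ℝ] X} {L : X →L[ℝ] ι → ℝ}
    (hLT : Function.Injective (L.comp T)) :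
    ∃ (R : ℝ) (c : ℝ≥0), 0 < c ∧ ∀ {Φ : X → ι → ℝ} {K : ℝ≥0}, LipschitzWith K Φ →
      ApproximatesLinearOn Φ L (closedBall 0 R) c →
        ∃ (y₀ : ι → ℝ) (s : ℝ), 0 < s ∧
          Minorizes ((ν.prod κ).map fun q => Φ (q.2 + T q.1))
            (volume.restrict (closedBall y₀ s)) := by
  obtain ⟨z₀, hz₀⟩ := hUne
  obtain ⟨r, hr, hrU⟩ := nhds_basis_closedBall.mem_iff.1 (hUopen.mem_nhds hz₀)
  have hνr : Minorizes ν (volume.restrict (closedBall z₀ r)) :=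
    hν.trans ⟨1, one_ne_zero, by simpa using Measure.restrict_mono_set volume hrU⟩
  obtain ⟨ξ₀, hξ₀⟩ := Measure.nonempty_support hκ
  let M : (ι → ℝ) ≃L[ℝ] ι → ℝ :=
    (LinearEquiv.ofInjectiveEndo (L.comp T).toLinearMap hLT).toContinuousLinearEquiv
  obtain ⟨R, s, c, hs, hc, hsurj⟩ :=
    exists_pos_eventually_closedBall_subset_image (T := T) (L := L) M rfl z₀ hr ξ₀
  refine ⟨R, c, hc, fun {Φ K} hlip happrox => ⟨Φ (ξ₀ + T z₀), s / 2, half_pos hs, ?_⟩⟩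
  have hlipT (ξ : X) : LipschitzWith (K * ‖T‖₊) fun z => Φ (ξ + T z) := by
    have htranslate : LipschitzWith ‖T‖₊ fun z => ξ + T z := by
      simpa using (LipschitzWith.const ξ).add T.lipschitz
    exact hlip.comp htranslate
  have hcont : Continuous fun q : (ι → ℝ) × X => Φ (q.2 + T q.1) :=
    hlip.continuous.comp (by fun_prop)
  exact minorizes_map_prod_of_eventually_lipschitzOnWith hcont hs hνr hξ₀
    (Eventually.of_forall fun ξ => (hlipT ξ).lipschitzOnWith) (hsurj happrox)

end MixtureOfPerturbations

section NeuronSelection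

open Module

variable {E : Type*} [NormedAddCommGroup E] [NormedSpace ℝ E] [MeasurableSpace E] [BorelSpace E]
  [SecondCountableTopology E] [CompleteSpace E] {m : Measure E} [IsFiniteMeasure m]
  {X : Type*} [NormedAddCommGroup X] [NormedSpace ℝ X] {realization : X →ₗ[ℝ] E → ℝ} {C : ℝ≥0}
  {ι : Type*} [Fintype ι]

namespace IsBoundedRealization

lemma exists_injective_pi_halfSpaceFunctional_comp (hr : IsBoundedRealization m realization C)
    {F : Type*} [NormedAddCommGroup F] [NormedSpace ℝ F] [FiniteDimensional ℝ F]
    (hι : Fintype.card ι = finrank ℝ F) {T : F →L[ℝ] X}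
    (hT : ∀ z, realization (T z) =ᵐ[m] 0 → z = 0) :
    ∃ g : ι → E →ᴬ[ℝ] ℝ, (∀ i, g i ≠ 0) ∧
      Function.Injective
        ((ContinuousLinearMap.pi fun i => hr.halfSpaceFunctional (g i)).comp T) := by
  let ℓ : {g : E →ᴬ[ℝ] ℝ // g ≠ 0} → F →ₗ[ℝ] ℝ := fun g => (hr.halfSpaceFunctional g.1).comp T
  have hℓ (z : F) (hz : ∀ g, ℓ g z = 0) : z = 0 :=
    hT z <| ae_eq_zero_of_setIntegral_halfSpace_eq_zero (hr.integrable _) fun g hg => hz ⟨g, hg⟩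
  obtain ⟨p, hp⟩ := exists_injective_pi_of_separating ℓ hℓ hι
  exact ⟨fun i => (p i).1, fun i => (p i).2, hp⟩

theorem exists_minorizes_map_neuronIntegral (hr : IsBoundedRealization m realization C)
    (hm : Integrable id m) (hm₀ : ∀ g : E →ᴬ[ℝ] ℝ, g ≠ 0 → m {x | g x = 0} = 0)
    [SecondCountableTopology X] [MeasurableSpace X] [BorelSpace X] {ν : Measure (ι → ℝ)}
    {κ : Measure X} [SFinite ν] [SFinite κ] (hκ : κ ≠ 0) {U : Set (ι → ℝ)} (hUopen : IsOpen U)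
    (hUne : U.Nonempty) (hν : Minorizes ν (volume.restrict U)) {T : (ι → ℝ) →L[ℝ] X}
    (hT : ∀ z, realization (T z) =ᵐ[m] 0 → z = 0) :
    ∃ (g : ι → E →ᴬ[ℝ] ℝ) (y₀ : ι → ℝ) (s : ℝ), 0 < s ∧
      Minorizes (((ν.prod κ).map fun q => q.2 + T q.1).map
        fun u i => neuronIntegral m (g i) (realization u)) (volume.restrict (closedBall y₀ s)) := by
  obtain ⟨g, hg₀, hginj⟩ := hr.exists_injective_pi_halfSpaceFunctional_comp
    (finrank_fintype_fun_eq_card ℝ).symm hT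
  obtain ⟨R, c, hc, hminor⟩ :=
    exists_minorizes_of_approximatesLinearOn hκ hUopen hUne hν hginj
  obtain ⟨t, ht⟩ := (eventually_all.2 fun i =>
    hr.eventually_approximatesLinearOn_neuronIntegral hm (hm₀ _ (hg₀ i)) R hc).exists
  have hlip : LipschitzWith (C * (m Set.univ).toNNReal)
      fun u i => neuronIntegral m (t • g i) (realization u) :=
    .of_dist_le_mul fun u v => (dist_pi_le_iff (by positivity)).2 fun i =>
      (hr.lipschitzWith_neuronIntegral hm (t • g i)).dist_le_mul u v
  obtain ⟨y₀, s, hs, hmin⟩ := hminor hlip (approximatesLinearOn_pi ht)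
  refine ⟨fun i => t • g i, y₀, s, hs, ?_⟩
  rwa [Measure.map_map hlip.continuous.measurable (by fun_prop)]

end IsBoundedRealization

end NeuronSelection

section ShallowNetwork

/-- The depth-2 network `x ↦ A₂ σ(A₁ x + b₁) + b₂`. -/
def shallowNet {p q r : ℕ} (A₁ : Matrix (Fin q) (Fin p) ℝ) (b₁ : Fin q → ℝ)
    (A₂ : Matrix (Fin r) (Fin q) ℝ) (b₂ : Fin r → ℝ) : ReLUNet where
  L := 2
  dims := fun
    | 0 => p
    | 1 => q
    | _ => r
  A := fun
    | 0 => A₁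
    | 1 => A₂
    | _ => 0
  b := fun
    | 0 => b₁
    | 1 => b₂
    | _ => 0

lemma shallowNet_realize {p q r : ℕ} (A₁ : Matrix (Fin q) (Fin p) ℝ) (b₁ : Fin q → ℝ)
    (A₂ : Matrix (Fin r) (Fin q) ℝ) (b₂ : Fin r → ℝ) (x : Fin p → ℝ) (j : Fin r) :
    (shallowNet A₁ b₁ A₂ b₂).realize x j =
      ∑ i, A₂ j i * relu (∑ k, A₁ i k * x k + b₁ i) + b₂ j := rfl

/-- The network `(t, x) ↦ (a · σ(t + g_j(x)) + b_j)_j`, with one hidden neuron per output. -/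
def encoderNet {n d : ℕ} (g : Fin d → (Fin n → ℝ) →ᴬ[ℝ] ℝ) (a : ℝ) (b : Fin d → ℝ) : ReLUNet :=
  shallowNet (Matrix.of fun i => Fin.cons 1 fun k => (g i).contLinear (Pi.single k 1))
    (fun i => g i 0) (Matrix.diagonal fun _ => a) b

lemma encoderNet_realize {n d : ℕ} (g : Fin d → (Fin n → ℝ) →ᴬ[ℝ] ℝ) (a : ℝ) (b : Fin d → ℝ)
    (t : ℝ) (x : Fin n → ℝ) (j : Fin d) :
    (encoderNet g a b).realize (Fin.cons t x : Fin (n + 1) → ℝ) j =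
      a * relu (t + g j x) + b j := by
  have hg : ∑ k, (g j).contLinear (Pi.single k 1) * x k + g j 0 = g j x := by
    conv_rhs => rw [(g j).decomp, Pi.add_apply, Function.const_apply, pi_eq_sum_univ' x, map_sum]
    simp [mul_comm]
  refine (shallowNet_realize _ _ _ _ _ _).trans ?_
  simpa [Fin.sum_univ_succ, Matrix.diagonal_apply, add_assoc] using
    congrArg (fun s => a * relu (t + s) + b j) hg

lemma average_encoderNet_realize {n d : ℕ} {m : Measure (Fin n → ℝ)} [IsFiniteMeasure m]
    [NeZero m] (hm : Integrable id m) {f : (Fin n → ℝ) → ℝ} (hf : Integrable f m)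
    (g : Fin d → (Fin n → ℝ) →ᴬ[ℝ] ℝ) (a : ℝ) (b : Fin d → ℝ) (j : Fin d) :
    ⨍ x, (encoderNet g (a * m.real Set.univ) b).realize (Fin.cons (f x) x : Fin (n + 1) → ℝ) j ∂m =
      a * neuronIntegral m (g j) f + b j := by
  have hneuron : Integrable (fun x => relu (f x + g j x)) m := integrable_neuron hm hf
  have hmass : m.real Set.univ ≠ 0 := measureReal_univ_ne_zero
  simp_rw [encoderNet_realize, average_eq]
  rw [integral_add (hneuron.const_mul _) (integrable_const _), integral_const_mul, integral_const,
    neuronIntegral, smul_eq_mul, smul_eq_mul]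
  field_simp

end ShallowNetwork

section EncoderTheorem

theorem encoder_no_general {n d : ℕ} {m : Measure (Fin n → ℝ)} [IsFiniteMeasure m] [NeZero m]
    (hm : Integrable id m) (hm₀ : ∀ g : (Fin n → ℝ) →ᴬ[ℝ] ℝ, g ≠ 0 → m {x | g x = 0} = 0)
    {X : Type*} [NormedAddCommGroup X] [NormedSpace ℝ X] [SecondCountableTopology X]
    [MeasurableSpace X] [BorelSpace X] {ι : X →ₗ[ℝ] (Fin n → ℝ) → ℝ} {C : ℝ≥0}
    (hι : IsBoundedRealization m ι C) {e : Fin d → X}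
    (he : ∀ z : Fin d → ℝ, ι (∑ j, z j • e j) =ᵐ[m] 0 → z = 0) {ν : Measure (Fin d → ℝ)}
    {κ : Measure X} [SFinite ν] [SFinite κ] (hκ : κ ≠ 0) {U : Set (Fin d → ℝ)}
    (hUopen : IsOpen U) (hUne : U.Nonempty) (hν : Minorizes ν (volume.restrict U)) :
    ∃ (ψ : ReLUNet) (_ : ψ.L = 2) (h0 : ψ.dims 0 = n + 1) (hout : ψ.dims (ψ.L - 1 + 1) = d)
      (c : ℝ), 0 < c ∧ ENNReal.ofReal c • cubeVol d ≤
        ((ν.prod κ).map fun q => q.2 + ∑ j, q.1 j • e j).map fun u j =>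
          ⨍ x, ψ.realize (fun i => (Fin.cons (ι u x) x : Fin (n + 1) → ℝ) (Fin.cast h0 i))
            (Fin.cast hout.symm j) ∂m := by
  let T : (Fin d → ℝ) →L[ℝ] X := (Fintype.linearCombination ℝ e).toContinuousLinearMap
  obtain ⟨g, y₀, s, hs, hneuron⟩ :=
    hι.exists_minorizes_map_neuronIntegral hm hm₀ hκ hUopen hUne hν (T := T) he
  let b : Fin d → ℝ := fun j => 1 / 2 - (2 * s)⁻¹ * y₀ j
  refine ⟨encoderNet g ((2 * s)⁻¹ * m.real Set.univ) b, rfl, rfl, rfl, ?_⟩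
  have hencoder : Minorizes (((ν.prod κ).map fun q => q.2 + T q.1).map
      fun u j => (2 * s)⁻¹ * neuronIntegral m (g j) (ι u) + b j) (cubeVol d) := by
    have hrescale := (hneuron.map (f := fun y j => (2 * s)⁻¹ * y j + b j) (by fun_prop)).trans
      (minorizes_map_rescale_closedBall_cubeVol y₀ hs)
    have hmeas : Measurable fun u (j : Fin d) => neuronIntegral m (g j) (ι u) :=
      measurable_pi_lambda _ fun j =>
        (hι.lipschitzWith_neuronIntegral hm (g j)).continuous.measurable
    rwa [Measure.map_map (by fun_prop) hmeas] at hrescale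
  simp_rw [← average_encoderNet_realize hm (hι.integrable _) g] at hencoder
  exact hencoder.exists_ofReal_smul_le

end EncoderTheorem

section AssumptionD

variable {d : ℕ}

lemma minorizes_productLaw {ρ : Fin d → ℝ → ℝ} {a b ε : Fin d → ℝ} (hε : ∀ j, 0 < ε j)
    (hρ : ∀ j, ∀ᵐ z ∂volume.restrict (Set.Ioo (a j) (b j)), ε j ≤ ρ j z) :
    Minorizes (productLaw ρ) (volume.restrict (Set.univ.pi fun j => Set.Ioo (a j) (b j))) := by
  have hbox : MeasurableSet (Set.univ.pi fun j => Set.Ioo (a j) (b j)) :=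
    .univ_pi fun _ => measurableSet_Ioo
  have hcoord : ∀ᵐ z : Fin d → ℝ, ∀ j, z j ∈ Set.Ioo (a j) (b j) → ε j ≤ ρ j (z j) :=
    ae_all_iff.2 fun j =>
      (Measure.quasiMeasurePreserving_eval (fun _ : Fin d => (volume : Measure ℝ)) j).ae
        ((ae_restrict_iff' measurableSet_Ioo).1 (hρ j))
  have hprod : ∀ᵐ z ∂volume.restrict (Set.univ.pi fun j => Set.Ioo (a j) (b j)),
      ENNReal.ofReal (∏ j, ε j) ≤ ENNReal.ofReal (∏ j, ρ j (z j)) := by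
    filter_upwards [ae_restrict_mem hbox, ae_restrict_of_ae hcoord] with z hzbox hz
    exact ENNReal.ofReal_le_ofReal
      (Finset.prod_le_prod (fun j _ => (hε j).le) fun j _ => hz j (hzbox j trivial))
  refine ⟨ENNReal.ofReal (∏ j, ε j),
    (ENNReal.ofReal_pos.2 (Finset.prod_pos fun j _ => hε j)).ne', ?_⟩
  rw [← withDensity_const]
  calc (volume.restrict _).withDensity (fun _ => ENNReal.ofReal (∏ j, ε j))
      ≤ (volume.restrict (Set.univ.pi fun j => Set.Ioo (a j) (b j))).withDensity
          fun z => ENNReal.ofReal (∏ j, ρ j (z j)) := withDensity_mono hprod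
    _ = (productLaw ρ).restrict (Set.univ.pi fun j => Set.Ioo (a j) (b j)) :=
        (restrict_withDensity hbox _).symm
    _ ≤ productLaw ρ := Measure.restrict_le_self

variable {X : Type*} [NormedAddCommGroup X] [NormedSpace ℝ X] [MeasurableSpace X]
  {μ : Measure X} {e : Fin d → X} {estar : Fin d → X → ℝ}

lemma AssumptionD.exists_eq_map_prod [BorelSpace X] [SecondCountableTopology X]
    (h : AssumptionD μ d e estar) :
    ∃ (ν : Measure (Fin d → ℝ)) (κ : Measure X) (U : Set (Fin d → ℝ)),
      IsProbabilityMeasure ν ∧ IsProbabilityMeasure κ ∧ IsOpen U ∧ U.Nonempty ∧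
        Minorizes ν (volume.restrict U) ∧
        μ = (ν.prod κ).map fun q => q.2 + ∑ j, q.1 j • e j := by
  obtain ⟨-, -, ρ, -, hρ, Ξ, _, P, _, y, ξ, hy, hξ, hindep, hlaw, -, rfl⟩ := h
  choose a b hab ε hε hερ using hρ
  refine ⟨P.map y, P.map ξ, Set.univ.pi fun j => Set.Ioo (a j) (b j),
    Measure.isProbabilityMeasure_map hy.aemeasurable,
    Measure.isProbabilityMeasure_map hξ.aemeasurable,
    isOpen_set_pi Set.finite_univ fun _ _ => isOpen_Ioo,
    Set.univ_pi_nonempty_iff.2 fun j => Set.nonempty_Ioo.2 (hab j),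
    hlaw ▸ minorizes_productLaw hε hερ, ?_⟩
  rw [← (ProbabilityTheory.indepFun_iff_map_prod_eq_prod_map_map hy.aemeasurable
    hξ.aemeasurable).1 hindep, Measure.map_map (by fun_prop) (by fun_prop)]
  rfl

end AssumptionD

section Domain

variable {X : Type*} [NormedAddCommGroup X] [NormedSpace ℝ X]

lemma IsBoundedRealization.eq_zero_of_ae_eq_zero_of_biorthogonal {E κ : Type*}
    [MeasurableSpace E] [Fintype κ] [DecidableEq κ] {m : Measure E} {ι : X →ₗ[ℝ] E → ℝ} {C : ℝ≥0}
    (hι : IsBoundedRealization m ι C) {e : κ → X} {ker : κ → E → ℝ}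
    (hker : ∀ j, Integrable (ker j) m)
    (hbiorth : ∀ j k, ∫ x, ι (e k) x * ker j x ∂m = if j = k then 1 else 0) {z : κ → ℝ}
    (hz : ι (∑ j, z j • e j) =ᵐ[m] 0) : z = 0 := by
  ext j
  have hint (k : κ) : Integrable (fun x => z k * (ι (e k) x * ker j x)) m :=
    ((hker j).bdd_mul (hι.aestronglyMeasurable _) (hι.ae_abs_le _)).const_mul _
  calc z j = ∑ k, z k * ∫ x, ι (e k) x * ker j x ∂m := by simp [hbiorth]
    _ = ∫ x, ι (∑ k, z k • e k) x * ker j x ∂m := by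
        simp_rw [← integral_const_mul, ← integral_finsetSum _ fun k _ => hint k]
        simp [Finset.sum_mul, mul_assoc]
    _ = 0 := integral_eq_zero_of_ae (hz.mono fun x hx => by simp [hx])

lemma isBoundedRealization_restrict {E : Type*} [MeasurableSpace E] {m : Measure E} {D : Set E}
    (hD : MeasurableSet D) {ι : X →ₗ[ℝ] E → ℝ} (hmeas : ∀ u, Measurable (ι u)) {C : ℝ}
    (hC : ∀ u, ∀ x ∈ D, |ι u x| ≤ C * ‖u‖) :
    IsBoundedRealization (m.restrict D) ι C.toNNReal where
  aestronglyMeasurable u := (hmeas u).aestronglyMeasurable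
  ae_abs_le u := (ae_restrict_mem hD).mono fun x hx =>
    (hC u x hx).trans (by gcongr; exact C.le_coe_toNNReal)

lemma integrableOn_id_of_isBounded {E : Type*} [NormedAddCommGroup E] [SecondCountableTopology E]
    [MeasurableSpace E] [OpensMeasurableSpace E] {m : Measure E} {D : Set E}
    (hD : MeasurableSet D) (hDb : Bornology.IsBounded D) (hm : m D < ∞) : IntegrableOn id D m := by
  obtain ⟨R, hR⟩ := hDb.exists_norm_le
  exact .of_bound hm aestronglyMeasurable_id R ((ae_restrict_mem hD).mono hR)

end Domain

/-- **Proposition (NO encoder construction).** Let `D ⊆ ℝ^{d_D}` be a bounded Lipschitz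
domain, `X(D) ⊆ L^∞(D)` a Banach space of functions on `D` (modeled by a continuous
injective linear realization map `ι` into bounded functions on `D`), and `μ` a Borel
probability measure on `X(D)` satisfying Assumption (d) whose biorthogonal functionals
are represented by `L^1(D)`-kernels. Then there are a shallow (depth-2) ReLU network
`R : ℝ × ℝ^{d_D} → ℝ^d` and a constant `c > 0` such that the averaging encoder
`E(u) = ⨍_D R(u(x), x) dx` satisfies `E_#μ ≥ c · Unif([0,1]^d)`. -/
theorem encoder_no
    (dD : ℕ) (Dset : Set (Fin dD → ℝ))
    (hDo : IsOpen Dset) (hDb : Bornology.IsBounded Dset) (hDne : Dset.Nonempty)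
    {X : Type*} [NormedAddCommGroup X] [NormedSpace ℝ X] [CompleteSpace X]
    [SecondCountableTopology X] [MeasurableSpace X] [BorelSpace X]
    (ι : X →ₗ[ℝ] ((Fin dD → ℝ) → ℝ)) (hinj : Function.Injective ι)
    (hmeasι : ∀ u, Measurable (ι u))
    (hbdι : ∃ CX : ℝ, ∀ u : X, ∀ x ∈ Dset, |ι u x| ≤ CX * ‖u‖)
    (d : ℕ) (hd : 1 ≤ d)
    (μ : Measure X) [IsProbabilityMeasure μ]
    (hass : ∃ (e : Fin d → X) (ker : Fin d → (Fin dD → ℝ) → ℝ),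
      (∀ j, Integrable (ker j) (volume.restrict Dset)) ∧
      AssumptionD μ d e fun j u => ∫ x in Dset, ι u x * ker j x) :
    ∃ (ψ : ReLUNet) (h2 : ψ.L = 2) (h0 : ψ.dims 0 = dD + 1)
      (hout : ψ.dims (ψ.L - 1 + 1) = d) (c : ℝ), 0 < c ∧
      ENNReal.ofReal c • cubeVol d ≤
        Measure.map
          (fun u (j : Fin d) =>
            ⨍ x in Dset,
              ψ.realize (fun i => (Fin.cons (ι u x) x : Fin (dD + 1) → ℝ) (Fin.cast h0 i)) (Fin.cast hout.symm j)) μ := by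
  obtain ⟨C, hC⟩ := hbdι
  obtain ⟨e, ker, hker, hA⟩ := hass
  obtain ⟨ν, κ, U, _, _, hUopen, hUne, hν, rfl⟩ := hA.exists_eq_map_prod
  have hDfin : volume Dset < ∞ := hDb.measure_lt_top
  have : IsFiniteMeasure (volume.restrict Dset) := ⟨by simpa using hDfin⟩
  have : NeZero (volume.restrict Dset) :=
    ⟨Measure.restrict_eq_zero.not.2 (hDo.measure_pos volume hDne).ne'⟩
  have hι := isBoundedRealization_restrict (m := volume) hDo.measurableSet hmeasι hC
  exact encoder_no_general (integrableOn_id_of_isBounded hDo.measurableSet hDb hDfin)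
    (fun g hg => Measure.restrict_le_self.absolutelyContinuous
      (addHaar_affine_zeroSet_eq_zero volume hg)) hι
    (fun z => hι.eq_zero_of_ae_eq_zero_of_biorthogonal hker hA.2.1)
    (IsProbabilityMeasure.ne_zero κ) hUopen hUne hν

end
end
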